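/- For every T ∈ (0,1), if the free energy F(T) = −T log₂ Z(T) is computable, then T is weakly Chaitin T-random and T-compressible. -/

import Mathlib

open Filter

/-- A real number `α` is computable if some total recursive `f : ℕ+ → ℚ`
satisfies `|α - f n| < 1/n` for all `n`. -/
def ComputableReal (α : ℝ) : Prop :=
  ∃ f : ℕ+ → ℚ, Computable f ∧ ∀ n : ℕ+, |α - (f n : ℝ)| < 1 / (n : ℝ)

/-- A partial function on binary strings has prefix-free domain. -/
def PrefixFree (C : List Bool →. List Bool) : Prop :=
  ∀ p q : List Bool, (C p).Dom → (C q).Dom → p <+: q → p = q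

/-- `U` is an optimal prefix-free machine (universal self-delimiting Turing machine). -/
def OptimalMachine (U : List Bool →. List Bool) : Prop :=
  Partrec U ∧ PrefixFree U ∧
    ∀ C : List Bool →. List Bool, Partrec C → PrefixFree C →
      ∃ d : ℕ, ∀ p s, s ∈ C p → ∃ p', s ∈ U p' ∧ p'.length ≤ p.length + d

/-- Program-size (prefix-free Kolmogorov) complexity of `s` with respect to `U`. -/
noncomputable def complexity (U : List Bool →. List Bool) (s : List Bool) : ℕ :=
  sInf {n | ∃ p : List Bool, p.length = n ∧ s ∈ U p}

/-- The `i`-th bit (0-indexed) of the base-two expansion of the fractional part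
of `α`, in the expansion with infinitely many zeros. -/
noncomputable def bitOf (α : ℝ) (i : ℕ) : Bool := decide (⌊Int.fract α * 2 ^ (i + 1)⌋ % 2 = 1)

/-- The first `n` bits of the base-two expansion of `α - ⌊α⌋`
(with infinitely many zeros). -/
noncomputable def firstBits (α : ℝ) (n : ℕ) : List Bool := (List.range n).map (bitOf α)

/-- `α` is weakly Chaitin `T`-random: `∃ c, ∀ n, T·n − c ≤ H(α_n)`. -/
def WeaklyChaitinTRandom (U : List Bool →. List Bool) (T α : ℝ) : Prop :=
  ∃ c : ℕ, ∀ n : ℕ+, T * (n : ℝ) - (c : ℝ) ≤ (complexity U (firstBits α n) : ℝ)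

/-- `α` is `T`-compressible: `limsup H(α_n)/n ≤ T`. -/
def TCompressible (U : List Bool →. List Bool) (T α : ℝ) : Prop :=
  Filter.limsup (fun n : ℕ => (complexity U (firstBits α n) : ℝ) / (n : ℝ)) atTop ≤ T

/-- The partition function `Z(T) = ∑_{p ∈ dom U} 2^{-|p|/T}`. -/
noncomputable def Zfun (U : List Bool →. List Bool) (T : ℝ) : ℝ :=
  ∑' p : {p : List Bool // (U p).Dom}, (2 : ℝ) ^ (-((p : List Bool).length : ℝ) / T)

/-- The free energy `F(T) = -T log₂ Z(T)`. -/
noncomputable def Ffun (U : List Bool →. List Bool) (T : ℝ) : ℝ :=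
  -T * Real.logb 2 (Zfun U T)

/-!
For a finite set `S` of programs write `Z_S(t) = ∑_{p ∈ S} 2^(-|p|/t)` and
`F_S(t) = -t log₂ Z_S(t)`. Both growing `S` and raising `t` decrease `F_S(t)`, the latter at a rate
bounded away from `0`. Since `F(T)` is computable, `a / 2^n > T` is therefore witnessed by a stage
`S_k` of an enumeration of `dom U` with `F_{S_k}(a / 2^n) < F(T)`, which can be tested exactly in
integer arithmetic.

Randomness: the first `n` bits of `T` give such an `a` with `a / 2^n - T = O(2^(-n))`, hence a stage
`k` with `Z(T) - Z_{S_k}(T) = O(2^(-n))`. A program outside `S_k` weighs at most that much, so its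
length is at least `T n - O(1)`; some string computed from `k` has only such programs.

Compressibility: the first `⌈T n⌉` bits of `Ω = Z(1)` give a stage with `Ω - Ω_k ≤ 2^(-T n)`, so
that `Z(T) - Z_{S_k}(T) ≤ (Ω - Ω_k)^(1/T) ≤ 2^(-n)`. At this stage the least `a` that passes the
test determines the first `n` bits of `T` up to `O(1)` choices. Hence `H(T_n) ≤ T n + O(log n)`.
-/

section FinitePartitionSums

/-- The partition function at temperature `t` of a finite set of programs. -/
noncomputable def partitionSum (S : Finset (List Bool)) (t : ℝ) : ℝ :=
  ∑ p ∈ S, (2 : ℝ) ^ (-(p.length : ℝ) / t)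

/-- The free energy at temperature `t` of a finite set of programs. -/
noncomputable def partialFreeEnergy (S : Finset (List Bool)) (t : ℝ) : ℝ :=
  -t * Real.logb 2 (partitionSum S t)

variable {S S' : Finset (List Bool)} {p q : List Bool} {T t : ℝ}

theorem two_rpow_neg_div_le {x : ℝ} (hx : 0 ≤ x) (hT : 0 < T) (hTt : T ≤ t) :
    (2 : ℝ) ^ (-x / T) ≤ 2 ^ (-x / t) := by
  refine Real.rpow_le_rpow_of_exponent_le one_le_two ?_
  rw [neg_div, neg_div]
  exact neg_le_neg (div_le_div_of_nonneg_left hx hT hTt)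

theorem partitionSum_le_of_le (hT : 0 < T) (hTt : T ≤ t) :
    partitionSum S T ≤ partitionSum S t :=
  Finset.sum_le_sum fun _ _ => two_rpow_neg_div_le (Nat.cast_nonneg _) hT hTt

theorem partitionSum_mono (h : S ⊆ S') (t : ℝ) : partitionSum S t ≤ partitionSum S' t :=
  Finset.sum_le_sum_of_subset_of_nonneg h fun _ _ _ => by positivity

theorem rpow_le_partitionSum (hp : p ∈ S) (t : ℝ) :
    (2 : ℝ) ^ (-(p.length : ℝ) / t) ≤ partitionSum S t :=
  Finset.single_le_sum (f := fun p : List Bool => (2 : ℝ) ^ (-(p.length : ℝ) / t))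
    (fun _ _ => by positivity) hp

theorem partitionSum_pos (hp : p ∈ S) (t : ℝ) : 0 < partitionSum S t :=
  lt_of_lt_of_le (by positivity) (rpow_le_partitionSum hp t)

theorem partialFreeEnergy_eq_length_sub (hp : p ∈ S) (ht : 0 < t) :
    partialFreeEnergy S t =
      p.length - t * Real.logb 2 (∑ r ∈ S, (2 : ℝ) ^ (-((r.length : ℝ) - p.length) / t)) := by
  set Y := ∑ r ∈ S, (2 : ℝ) ^ (-((r.length : ℝ) - p.length) / t)
  have hY : 0 < Y := Finset.sum_pos (fun _ _ => by positivity) ⟨p, hp⟩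
  have factor : partitionSum S t = 2 ^ (-(p.length : ℝ) / t) * Y := by
    rw [partitionSum, Finset.mul_sum]
    refine Finset.sum_congr rfl fun r _ => ?_
    rw [← Real.rpow_add two_pos]
    ring_nf
  rw [partialFreeEnergy, factor, Real.logb_mul (by positivity) hY.ne',
    Real.logb_rpow two_pos (by norm_num)]
  field_simp
  ring

/-- The minimal length splits off as an additive constant; what is left is a multiple of `t` whose
coefficient is monotone in `t` and bounded below by the contribution of the second program. -/
theorem partialFreeEnergy_add_le (hp : p ∈ S) (hmin : ∀ r ∈ S, p.length ≤ r.length)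
    (hq : q ∈ S) (hpq : p ≠ q) (hT : 0 < T) (hTt : T ≤ t) :
    partialFreeEnergy S t + (t - T) * Real.logb 2 (1 + 2 ^ (-(q.length : ℝ) / T)) ≤
      partialFreeEnergy S T := by
  have ht : 0 < t := hT.trans_le hTt
  rw [partialFreeEnergy_eq_length_sub hp ht, partialFreeEnergy_eq_length_sub hp hT]
  set Y : ℝ → ℝ := fun u => ∑ r ∈ S, (2 : ℝ) ^ (-((r.length : ℝ) - p.length) / u)
  have excess_nonneg : ∀ r ∈ S, (0 : ℝ) ≤ (r.length : ℝ) - p.length := fun r hr =>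
    sub_nonneg.2 (Nat.cast_le.2 (hmin r hr))
  have Y_mono : Y T ≤ Y t :=
    Finset.sum_le_sum fun r hr => two_rpow_neg_div_le (excess_nonneg r hr) hT hTt
  have le_Y : 1 + (2 : ℝ) ^ (-(q.length : ℝ) / T) ≤ Y T := calc
    1 + (2 : ℝ) ^ (-(q.length : ℝ) / T)
        ≤ 2 ^ (-((p.length : ℝ) - p.length) / T) + 2 ^ (-((q.length : ℝ) - p.length) / T) := by
      rw [sub_self, neg_zero, zero_div, Real.rpow_zero]
      gcongr
      · exact one_le_two
      · exact sub_le_self _ (Nat.cast_nonneg _)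
    _ = ∑ r ∈ {p, q}, (2 : ℝ) ^ (-((r.length : ℝ) - p.length) / T) := by
      rw [Finset.sum_pair hpq]
    _ ≤ Y T := Finset.sum_le_sum_of_subset_of_nonneg
      (Finset.insert_subset hp (Finset.singleton_subset_iff.2 hq)) fun _ _ _ => by positivity
  have pos : (0 : ℝ) < 1 + 2 ^ (-(q.length : ℝ) / T) := by positivity
  have log_T := Real.logb_le_logb_of_le one_lt_two pos le_Y
  have log_t := Real.logb_le_logb_of_le one_lt_two (pos.trans_le le_Y) Y_mono
  change (p.length : ℝ) - t * Real.logb 2 (Y t) + _ ≤ (p.length : ℝ) - T * Real.logb 2 (Y T)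
  linarith [mul_le_mul_of_nonneg_left log_t ht.le,
    mul_le_mul_of_nonneg_left log_T (sub_nonneg.2 hTt)]

theorem partialFreeEnergy_anti (hp : p ∈ S) (hmin : ∀ r ∈ S, p.length ≤ r.length)
    (hq : q ∈ S) (hpq : p ≠ q) (hT : 0 < T) (hTt : T ≤ t) :
    partialFreeEnergy S t ≤ partialFreeEnergy S T := by
  have slope_nonneg : 0 ≤ Real.logb 2 (1 + 2 ^ (-(q.length : ℝ) / T)) :=
    Real.logb_nonneg one_lt_two (le_add_of_nonneg_right (by positivity))
  linarith [partialFreeEnergy_add_le hp hmin hq hpq hT hTt,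
    mul_nonneg (sub_nonneg.2 hTt) slope_nonneg]

/-- Convexity of the partition sum in the inverse temperature, between `1 / T` and `1`. -/
theorem partitionSum_sub_le (hS : partitionSum S 1 ≤ 1) (hT : 0 < T) (hT1 : T < 1) (hTt : T ≤ t)
    (ht1 : t ≤ 1) : partitionSum S t - partitionSum S T ≤ (t - T) / (T * (1 - T)) := by
  have ht : 0 < t := hT.trans_le hTt
  have h1T : 0 < 1 - T := sub_pos.2 hT1
  set w := (t - T) / (t * (1 - T)) with hw
  have w_nonneg : 0 ≤ w := div_nonneg (sub_nonneg.2 hTt) (by positivity)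
  have one_sub_w : 1 - w = T * (1 - t) / (t * (1 - T)) := by
    rw [hw]; field_simp; ring
  have one_sub_w_nonneg : 0 ≤ 1 - w := by
    rw [one_sub_w]
    exact div_nonneg (mul_nonneg hT.le (sub_nonneg.2 ht1)) (by positivity)
  have term_le (x : ℝ) : (2 : ℝ) ^ (-x / t) ≤ w * 2 ^ (-x / 1) + (1 - w) * 2 ^ (-x / T) := by
    have interpolate : -x / t = -x / 1 * w + -x / T * (1 - w) := by
      rw [one_sub_w, hw]; field_simp; ring
    rw [interpolate, Real.rpow_add two_pos, Real.rpow_mul two_pos.le, Real.rpow_mul two_pos.le]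
    exact Real.geom_mean_le_arith_mean2_weighted w_nonneg one_sub_w_nonneg (by positivity)
      (by positivity) (by ring)
  have convex : partitionSum S t ≤ w * partitionSum S 1 + (1 - w) * partitionSum S T := by
    simp only [partitionSum, Finset.mul_sum, ← Finset.sum_add_distrib]
    exact Finset.sum_le_sum fun r _ => term_le r.length
  have Z_nonneg : 0 ≤ partitionSum S T := Finset.sum_nonneg fun _ _ => by positivity
  calc partitionSum S t - partitionSum S T
      ≤ w := by linarith [mul_le_mul_of_nonneg_left hS w_nonneg, mul_nonneg w_nonneg Z_nonneg]
    _ ≤ (t - T) / (T * (1 - T)) := by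
      rw [hw]
      gcongr

theorem partitionSum_le_rpow (S : Finset (List Bool)) (hT : 0 < T) (hT1 : T ≤ 1) :
    partitionSum S T ≤ partitionSum S 1 ^ (1 / T) := by
  have one_le : 1 ≤ 1 / T := (one_le_div hT).2 hT1
  induction S using Finset.induction_on with
  | empty => simp [partitionSum, Real.zero_rpow (inv_ne_zero hT.ne')]
  | insert r S hr ih =>
    simp only [partitionSum, Finset.sum_insert hr] at ih ⊢
    calc (2 : ℝ) ^ (-(r.length : ℝ) / T) + ∑ p ∈ S, (2 : ℝ) ^ (-(p.length : ℝ) / T)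
        ≤ (2 ^ (-(r.length : ℝ) / 1)) ^ (1 / T) +
            (∑ p ∈ S, (2 : ℝ) ^ (-(p.length : ℝ) / 1)) ^ (1 / T) := by
          rw [← Real.rpow_mul two_pos.le, div_one, mul_one_div]
          gcongr
      _ ≤ _ := Real.add_rpow_le_rpow_add (by positivity)
          (Finset.sum_nonneg fun _ _ => by positivity) one_le

theorem logb_two_sub_le {x y : ℝ} (hx : 0 < x) (hxy : x ≤ y) :
    Real.logb 2 y - Real.logb 2 x ≤ 2 * ((y - x) / x) := by
  have hy : 0 < y := hx.trans_le hxy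
  have half_le_log_two : (1 : ℝ) / 2 ≤ Real.log 2 := by linarith [Real.log_two_gt_d9]
  have ratio_nonneg : 0 ≤ (y - x) / x := div_nonneg (sub_nonneg.2 hxy) hx.le
  rw [← Real.logb_div hy.ne' hx.ne', Real.logb, div_le_iff₀ (Real.log_pos one_lt_two)]
  calc Real.log (y / x) ≤ y / x - 1 := Real.log_le_sub_one_of_pos (by positivity)
    _ = (y - x) / x := by rw [sub_div, div_self hx.ne']
    _ ≤ 2 * ((y - x) / x) * Real.log 2 := by nlinarith

end FinitePartitionSums

section PartitionFunction

theorem uniquelyDecodable_of_prefix_imp_eq {α : Type*} {S : Set (List α)}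
    (hS : ∀ p ∈ S, ∀ q ∈ S, p <+: q → p = q) (hnil : [] ∉ S) :
    InformationTheory.UniquelyDecodable S := by
  have flatten_ne_nil {a : List α} {L : List (List α)} (ha : a ∈ S) : (a :: L).flatten ≠ [] := by
    intro h
    rw [List.flatten_cons, List.append_eq_nil_iff] at h
    exact hnil (h.1 ▸ ha)
  intro L₁
  induction L₁ with
  | nil =>
    rintro (_ | ⟨b, M⟩) _ hM h
    · rfl
    · exact absurd h.symm (flatten_ne_nil (hM b List.mem_cons_self))
  | cons a L ih =>
    rintro (_ | ⟨b, M⟩) hL hM h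
    · exact absurd h (flatten_ne_nil (hL a List.mem_cons_self))
    have ha := hL a List.mem_cons_self
    have hb := hM b List.mem_cons_self
    rw [List.flatten_cons, List.flatten_cons] at h
    obtain rfl : a = b := by
      rcases List.prefix_or_prefix_of_prefix ⟨_, h⟩ (List.prefix_append b M.flatten) with hab | hba
      · exact hS a ha b hb hab
      · exact (hS b hb a ha hba).symm
    rw [ih M (fun w hw => hL w (List.mem_cons_of_mem _ hw))
      (fun w hw => hM w (List.mem_cons_of_mem _ hw)) (List.append_cancel_left h)]

variable {U : List Bool →. List Bool} {S : Finset (List Bool)} {T t : ℝ}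

theorem partitionSum_one_le_one (hU : PrefixFree U) (hS : ∀ p ∈ S, (U p).Dom) :
    partitionSum S 1 ≤ 1 := by
  by_cases hnil : [] ∈ S
  · obtain rfl : S = {[]} := Finset.eq_singleton_iff_unique_mem.2
      ⟨hnil, fun q hq => (hU [] q (hS _ hnil) (hS q hq) List.nil_prefix).symm⟩
    simp [partitionSum]
  · have kraft := InformationTheory.kraft_mcmillan_inequality (S := S)
      (uniquelyDecodable_of_prefix_imp_eq (fun p hp q hq => hU p q (hS p hp) (hS q hq)) hnil)
    refine le_of_eq_of_le (Finset.sum_congr rfl fun p _ => ?_) kraft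
    rw [div_one, Real.rpow_neg two_pos.le, Real.rpow_natCast, Fintype.card_bool, one_div, inv_pow,
      Nat.cast_two]

theorem hasSum_Zfun (hU : PrefixFree U) (ht : 0 < t) (ht1 : t ≤ 1) :
    HasSum (fun p : {p : List Bool // (U p).Dom} => (2 : ℝ) ^ (-(p.1.length : ℝ) / t))
      (Zfun U t) := by
  refine (summable_of_sum_le (c := 1) (fun _ => by positivity) fun u => ?_).hasSum
  have hdom : ∀ p ∈ u.map (Function.Embedding.subtype _), (U p).Dom :=
    fun _ => u.property_of_mem_map_subtype
  calc ∑ p ∈ u, (2 : ℝ) ^ (-(p.1.length : ℝ) / t)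
      = partitionSum (u.map (Function.Embedding.subtype _)) t := by simp [partitionSum]
    _ ≤ partitionSum (u.map (Function.Embedding.subtype _)) 1 := partitionSum_le_of_le ht ht1
    _ ≤ 1 := partitionSum_one_le_one hU hdom

theorem partitionSum_le_Zfun (hU : PrefixFree U) (hS : ∀ p ∈ S, (U p).Dom) (ht : 0 < t)
    (ht1 : t ≤ 1) : partitionSum S t ≤ Zfun U t := by
  classical
  rw [partitionSum, ← Finset.sum_subtype_of_mem (p := fun p => (U p).Dom) _ hS]
  exact sum_le_hasSum _ (fun _ _ => by positivity) (hasSum_Zfun hU ht ht1)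

theorem exists_lt_partitionSum (hU : PrefixFree U) (ht : 0 < t) (ht1 : t ≤ 1) {x : ℝ}
    (hx : x < Zfun U t) :
    ∃ S : Finset (List Bool), (∀ p ∈ S, (U p).Dom) ∧ x < partitionSum S t := by
  obtain ⟨u, hu⟩ := ((hasSum_Zfun hU ht ht1).eventually (lt_mem_nhds hx)).exists
  exact ⟨u.map (Function.Embedding.subtype _), fun _ => u.property_of_mem_map_subtype,
    by simpa [partitionSum] using hu⟩

theorem Zfun_le_of_forall_partitionSum_le (hU : PrefixFree U) (ht : 0 < t) (ht1 : t ≤ 1) {x : ℝ}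
    (h : ∀ S : Finset (List Bool), (∀ p ∈ S, (U p).Dom) → partitionSum S t ≤ x) :
    Zfun U t ≤ x := by
  by_contra! hx
  obtain ⟨S, hS, hxS⟩ := exists_lt_partitionSum hU ht ht1 hx
  exact (h S hS).not_gt hxS

theorem Zfun_le_one (hU : PrefixFree U) (ht : 0 < t) (ht1 : t ≤ 1) : Zfun U t ≤ 1 :=
  Zfun_le_of_forall_partitionSum_le hU ht ht1 fun _ hS =>
    (partitionSum_le_of_le ht ht1).trans (partitionSum_one_le_one hU hS)

theorem partitionSum_add_rpow_le_Zfun (hU : PrefixFree U) (hS : ∀ p ∈ S, (U p).Dom) {p : List Bool}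
    (hp : (U p).Dom) (hpS : p ∉ S) (ht : 0 < t) (ht1 : t ≤ 1) :
    partitionSum S t + 2 ^ (-(p.length : ℝ) / t) ≤ Zfun U t := by
  have sum_insert : partitionSum (insert p S) t = 2 ^ (-(p.length : ℝ) / t) + partitionSum S t :=
    Finset.sum_insert hpS
  rw [add_comm, ← sum_insert]
  exact partitionSum_le_Zfun hU (Finset.forall_mem_insert _ _ _ |>.2 ⟨hp, hS⟩) ht ht1

theorem Zfun_sub_partitionSum_le_rpow (hU : PrefixFree U) (hS : ∀ p ∈ S, (U p).Dom) (hT : 0 < T)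
    (hT1 : T ≤ 1) :
    Zfun U T - partitionSum S T ≤ (Zfun U 1 - partitionSum S 1) ^ (1 / T) := by
  rw [sub_le_iff_le_add]
  refine Zfun_le_of_forall_partitionSum_le hU hT hT1 fun S' hS' => ?_
  have split (t : ℝ) : partitionSum (S' \ S) t + partitionSum S t = partitionSum (S' ∪ S) t := by
    rw [partitionSum, partitionSum, partitionSum, ← Finset.sum_union Finset.sdiff_disjoint,
      Finset.sdiff_union_self_eq_union]
  have hdom : ∀ p ∈ S' ∪ S, (U p).Dom := fun p hp =>
    (Finset.mem_union.1 hp).elim (hS' p) (hS p)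
  have omega_le : partitionSum (S' \ S) 1 ≤ Zfun U 1 - partitionSum S 1 := by
    linarith [split 1, partitionSum_le_Zfun hU hdom one_pos le_rfl]
  calc partitionSum S' T ≤ partitionSum (S' ∪ S) T := partitionSum_mono Finset.subset_union_left T
    _ = partitionSum (S' \ S) T + partitionSum S T := (split T).symm
    _ ≤ partitionSum (S' \ S) 1 ^ (1 / T) + partitionSum S T := by
      gcongr
      exact partitionSum_le_rpow _ hT hT1
    _ ≤ (Zfun U 1 - partitionSum S 1) ^ (1 / T) + partitionSum S T := by
      gcongr
      exact Finset.sum_nonneg fun _ _ => by positivity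

end PartitionFunction

section BinaryDigits

/-- The natural number with binary digits `l`, most significant first. -/
def binVal (l : List Bool) : ℕ := l.foldl (fun acc b => 2 * acc + b.toNat) 0

/-- The last `n` binary digits of `x`, most significant first. -/
def binDigits (n x : ℕ) : List Bool :=
  (List.range n).map fun i => decide (x / 2 ^ (n - 1 - i) % 2 = 1)

@[simp]
theorem length_binDigits (n x : ℕ) : (binDigits n x).length = n := by simp [binDigits]

theorem binDigits_succ (n x : ℕ) :
    binDigits (n + 1) x = binDigits n (x / 2) ++ [decide (x % 2 = 1)] := by
  simp only [binDigits, List.range_succ, List.map_append, List.map_singleton,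
    Nat.add_sub_cancel, Nat.sub_self, pow_zero, Nat.div_one]
  congr 1
  refine List.map_congr_left fun i hi => ?_
  have hin : n - i = n - 1 - i + 1 := by have := List.mem_range.1 hi; omega
  rw [Nat.div_div_eq_div_mul, ← pow_succ', hin]

theorem binVal_append_singleton (l : List Bool) (b : Bool) :
    binVal (l ++ [b]) = 2 * binVal l + b.toNat := by
  simp [binVal, List.foldl_append]

theorem binVal_binDigits {n x : ℕ} (hx : x < 2 ^ n) : binVal (binDigits n x) = x := by
  induction n generalizing x with
  | zero =>
    obtain rfl : x = 0 := by simpa using hx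
    rfl
  | succ n ih =>
    rw [binDigits_succ, binVal_append_singleton, ih (by rw [pow_succ] at hx; omega)]
    rcases Nat.mod_two_eq_zero_or_one x with h | h <;> simp [h] <;> omega

theorem firstBits_eq_binDigits {α : ℝ} (h0 : 0 ≤ α) (h1 : α < 1) (n : ℕ) :
    firstBits α n = binDigits n ⌊α * 2 ^ n⌋₊ := by
  refine List.map_congr_left fun i hi => ?_
  have pow_eq : (2 : ℝ) ^ n = 2 ^ (i + 1) * 2 ^ (n - 1 - i) := by
    rw [← pow_add]
    congr 1
    have := List.mem_range.1 hi
    omega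
  have prefix_eq : α * 2 ^ (i + 1) = α * 2 ^ n / (2 ^ (n - 1 - i) : ℕ) := by
    rw [pow_eq]; push_cast; field_simp
  have floor_eq : ⌊α * 2 ^ (i + 1)⌋ = ((⌊α * 2 ^ n⌋₊ / 2 ^ (n - 1 - i) : ℕ) : ℤ) := by
    rw [prefix_eq, ← Nat.floor_div_natCast, Int.natCast_floor_eq_floor (by positivity)]
  rw [bitOf, Int.fract_eq_self.2 ⟨h0, h1⟩, floor_eq]
  exact decide_eq_decide.2 (by norm_cast)

theorem primrec_pow : Primrec₂ (fun a b : ℕ => a ^ b) :=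
  Primrec₂.unpaired'.1 Nat.Primrec.pow

theorem primrec_two_pow : Primrec (fun n : ℕ => 2 ^ n) :=
  primrec_pow.comp (Primrec.const 2) Primrec.id

theorem primrec_binVal : Primrec binVal := by
  refine Primrec.list_foldl (f := fun l : List Bool => l) (h := fun _ z => 2 * z.1 + z.2.toNat)
    Primrec.id (Primrec.const 0) ?_
  exact Primrec.nat_add.comp
    (Primrec.nat_mul.comp (Primrec.const 2) (Primrec.fst.comp Primrec.snd))
    ((Primrec.dom_finite Bool.toNat).comp (Primrec.snd.comp Primrec.snd))

theorem primrec_binDigits : Primrec₂ binDigits := by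
  refine Primrec.list_map (Primrec.list_range.comp Primrec.fst) ?_
  have shift : Primrec fun z : (ℕ × ℕ) × ℕ => 2 ^ (z.1.1 - 1 - z.2) :=
    primrec_two_pow.comp (Primrec.nat_sub.comp
      (Primrec.nat_sub.comp (Primrec.fst.comp Primrec.fst) (Primrec.const 1)) Primrec.snd)
  have digit : Primrec fun z : (ℕ × ℕ) × ℕ => z.1.2 / 2 ^ (z.1.1 - 1 - z.2) % 2 :=
    Primrec.nat_mod.comp (Primrec.nat_div.comp (Primrec.snd.comp Primrec.fst) shift)
      (Primrec.const 2)
  exact (Primrec.eq.comp digit (Primrec.const 1)).decide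

end BinaryDigits

section Programs

variable {U : List Bool →. List Bool}

theorem complexity_le_length {s p : List Bool} (h : s ∈ U p) : complexity U s ≤ p.length :=
  Nat.sInf_le ⟨p, rfl, h⟩

theorem exists_length_eq_complexity {s p : List Bool} (h : s ∈ U p) :
    ∃ q, s ∈ U q ∧ q.length = complexity U s := by
  obtain ⟨q, hlen, hq⟩ := Nat.sInf_mem (s := {n | ∃ p : List Bool, p.length = n ∧ s ∈ U p})
    ⟨_, p, rfl, h⟩
  exact ⟨q, hq, hlen⟩

/-- The length of the unary part of a self-delimiting header. -/
def headerLength (p : List Bool) : ℕ := p.idxOf false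

/-- The number announced by the header of `p`, which has as many bits as its unary part. -/
def headerValue (p : List Bool) : ℕ :=
  binVal ((p.drop (headerLength p + 1)).take (headerLength p))

/-- What remains of `p` after its self-delimiting header. -/
def payload (p : List Bool) : List Bool := p.drop (2 * headerLength p + 1)

/-- The program `1ʲ 0 m s`, where the number `m` is written with `j` bits. -/
def frame (j m : ℕ) (s : List Bool) : List Bool :=
  List.replicate j true ++ false :: (binDigits j m ++ s)

/-- The self-delimiting machine for `φ`: the header announces, as a pair, the parameter of `φ` and
the length of the payload. -/
def selfDelimiting (φ : ℕ × List Bool →. List Bool) (p : List Bool) : Part (List Bool) :=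
  bif decide (p.length = 2 * headerLength p + 1 + (headerValue p).unpair.2) then
    φ ((headerValue p).unpair.1, payload p)
  else Part.none

section Frame

variable (j m : ℕ) (s : List Bool)

theorem length_frame : (frame j m s).length = 2 * j + 1 + s.length := by
  simp [frame]; omega

theorem headerLength_frame : headerLength (frame j m s) = j := by
  rw [headerLength, frame, List.idxOf_append_of_notMem (by simp)]
  simp

theorem drop_frame : (frame j m s).drop (j + 1) = binDigits j m ++ s := by
  simp [frame, List.drop_append]

theorem payload_frame : payload (frame j m s) = s := by
  have hj : 2 * j + 1 = j + 1 + j := by ring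
  rw [payload, headerLength_frame, hj, ← List.drop_drop, drop_frame,
    List.drop_left' (length_binDigits j m)]

variable {j m} in
theorem headerValue_frame (hm : m < 2 ^ j) : headerValue (frame j m s) = m := by
  rw [headerValue, headerLength_frame, drop_frame, List.take_left' (length_binDigits j m),
    binVal_binDigits hm]

end Frame

theorem primrec_headerLength : Primrec headerLength :=
  Primrec.list_idxOf.comp (Primrec.const false) Primrec.id

theorem primrec_headerValue : Primrec headerValue :=
  primrec_binVal.comp (Primrec.list_take.comp primrec_headerLength
    (Primrec.list_drop.comp (Primrec.succ.comp primrec_headerLength) Primrec.id))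

theorem primrec_payload : Primrec payload :=
  Primrec.list_drop.comp
    (Primrec.succ.comp (Primrec.nat_mul.comp (Primrec.const 2) primrec_headerLength)) Primrec.id

theorem partrec_selfDelimiting {φ : ℕ × List Bool →. List Bool} (hφ : Partrec φ) :
    Partrec (selfDelimiting φ) := by
  have unpaired : Primrec fun p => (headerValue p).unpair := Primrec.unpair.comp primrec_headerValue
  have framed_length : Primrec fun p => 2 * headerLength p + 1 + (headerValue p).unpair.2 :=
    Primrec.nat_add.comp
      (Primrec.succ.comp (Primrec.nat_mul.comp (Primrec.const 2) primrec_headerLength))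
      (Primrec.snd.comp unpaired)
  exact Partrec.cond (Primrec.eq.comp Primrec.list_length framed_length).decide.to_comp
    (hφ.comp ((Primrec.fst.comp unpaired).pair primrec_payload).to_comp) Partrec.none

theorem prefixFree_selfDelimiting (φ : ℕ × List Bool →. List Bool) :
    PrefixFree (selfDelimiting φ) := by
  have length_eq {p} (h : (selfDelimiting φ p).Dom) :
      p.length = 2 * headerLength p + 1 + (headerValue p).unpair.2 := by
    by_contra hne
    simp [selfDelimiting, hne] at h
  rintro p _ hp hq ⟨r, rfl⟩
  have hp_len := length_eq hp
  have header_eq : headerLength (p ++ r) = headerLength p :=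
    List.idxOf_append_of_mem (List.idxOf_lt_length_iff.1 (show headerLength p < _ by omega))
  have value_eq : headerValue (p ++ r) = headerValue p := by
    rw [headerValue, header_eq, List.drop_append_of_le_length (by omega),
      List.take_append_of_le_length (by rw [List.length_drop]; omega), headerValue]
  have hq_len := length_eq hq
  rw [header_eq, value_eq, List.length_append] at hq_len
  rw [List.length_eq_zero_iff.1 (show r.length = 0 by omega), List.append_nil]

theorem OptimalMachine.exists_program_length_le (hU : OptimalMachine U)
    {φ : ℕ × List Bool →. List Bool} (hφ : Partrec φ) :
    ∃ d : ℕ, ∀ n j s x, x ∈ φ (n, s) → Nat.pair n s.length < 2 ^ j →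
      ∃ p, x ∈ U p ∧ p.length ≤ s.length + 2 * j + d := by
  obtain ⟨d, hd⟩ := hU.2.2 _ (partrec_selfDelimiting hφ) (prefixFree_selfDelimiting φ)
  refine ⟨d + 1, fun n j s x hx hj => ?_⟩
  have accepted : x ∈ selfDelimiting φ (frame j (Nat.pair n s.length) s) := by
    rw [selfDelimiting, length_frame, headerLength_frame, headerValue_frame s hj, payload_frame,
      Nat.unpair_pair]
    simpa using hx
  obtain ⟨p, hp, hlen⟩ := hd _ x accepted
  rw [length_frame] at hlen
  exact ⟨p, hp, by omega⟩

theorem OptimalMachine.exists_program (hU : OptimalMachine U) (s : List Bool) : ∃ p, s ∈ U p := by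
  obtain ⟨d, hd⟩ := hU.exists_program_length_le (φ := fun z => Part.some z.2) Computable.snd
  obtain ⟨p, hp, -⟩ := hd 0 _ s s (Part.mem_some s) Nat.lt_two_pow_self
  exact ⟨p, hp⟩

theorem OptimalMachine.exists_complexity_le_add (hU : OptimalMachine U)
    {φ : List Bool →. List Bool} (hφ : Partrec φ) :
    ∃ d : ℕ, ∀ s x, x ∈ φ s → complexity U x ≤ complexity U s + d := by
  obtain ⟨d, hd⟩ := hU.2.2 (fun p => (U p).bind φ) (hU.1.bind (hφ.comp Computable.snd).to₂)
    fun p q hp hq => hU.2.1 p q (Part.Dom.of_bind hp) (Part.Dom.of_bind hq)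
  refine ⟨d, fun s x hx => ?_⟩
  obtain ⟨r, hr⟩ := hU.exists_program s
  obtain ⟨p, hp, hlen⟩ := exists_length_eq_complexity hr
  obtain ⟨q, hq, hql⟩ := hd p x (Part.mem_bind hp hx)
  exact (complexity_le_length hq).trans (hlen ▸ hql)

end Programs

section Computability

theorem exists_partrec_isLeast {α : Type*} [Primcodable α] {P : α → ℕ → Prop}
    (hP : ComputablePred fun z : α × ℕ => P z.1 z.2) :
    ∃ φ : α →. ℕ, Partrec φ ∧ ∀ x k, k ∈ φ x ↔ IsLeast {k | P x k} k := by
  classical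
  refine ⟨_, Partrec.rfind (p := fun x k => Part.some (decide (P x k))) hP.decide.partrec.to₂,
    fun x k => Nat.mem_rfind.trans ?_⟩
  rw [Part.mem_some_iff, true_eq_decide_iff]
  refine and_congr_right fun _ => ⟨fun h m hm => not_lt.1 fun hlt => ?_, fun h m hlt => ?_⟩
  · exact of_decide_eq_false (Part.mem_some_iff.1 (h hlt)).symm hm
  · exact Part.mem_some_iff.2 (decide_eq_false fun hm => (h hm).not_gt hlt).symm

/-- The pair of numerator and denominator of a rational number, as a natural number. -/
def ratCode (q : ℚ) : ℕ := Nat.pair (Encodable.encode q.num) q.den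

theorem encode_int_add_one_div_two (z : ℤ) : (Encodable.encode z + 1) / 2 = z.natAbs := by
  rcases z with n | n
  · change (2 * n + 1) / 2 = n
    omega
  · change (2 * n + 1 + 1) / 2 = n + 1
    omega

theorem toNat_eq_ite_encode (z : ℤ) :
    z.toNat = if Encodable.encode z % 2 = 0 then Encodable.encode z / 2 else 0 := by
  rcases z with n | n
  · change n = if 2 * n % 2 = 0 then 2 * n / 2 else 0
    simp
  · change 0 = if (2 * n + 1) % 2 = 0 then (2 * n + 1) / 2 else 0
    simp

/-- The reducedness of the fraction, as a bounded quantification: `(k.unpair.1 + 1) / 2` is the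
absolute value of the integer encoded by `k.unpair.1`. -/
theorem mem_range_ratCode {k : ℕ} : k ∈ Set.range ratCode ↔ 0 < k.unpair.2 ∧
    ∀ g < k.unpair.2 + 1, (k.unpair.1 + 1) / 2 % g = 0 → k.unpair.2 % g = 0 → g = 1 := by
  constructor
  · rintro ⟨q, rfl⟩
    simp only [ratCode, Nat.unpair_pair, encode_int_add_one_div_two]
    refine ⟨q.den_pos, fun g _ hnum hden => ?_⟩
    exact Nat.eq_one_of_dvd_coprimes q.reduced (Nat.dvd_of_mod_eq_zero hnum)
      (Nat.dvd_of_mod_eq_zero hden)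
  · rintro ⟨hpos, hred⟩
    have encode_num : Encodable.encode (Denumerable.ofNat ℤ k.unpair.1) = k.unpair.1 :=
      Denumerable.encode_ofNat _
    have coprime : (Denumerable.ofNat ℤ k.unpair.1).natAbs.Coprime k.unpair.2 := by
      rw [← encode_int_add_one_div_two, encode_num]
      exact hred _ (Nat.lt_succ_of_le (Nat.gcd_le_right _ hpos))
        (Nat.mod_eq_zero_of_dvd (Nat.gcd_dvd_left _ _))
        (Nat.mod_eq_zero_of_dvd (Nat.gcd_dvd_right _ _))
    exact ⟨⟨_, k.unpair.2, hpos.ne', coprime⟩, by rw [ratCode, encode_num, Nat.pair_unpair]⟩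

theorem primrecPred_mem_range_ratCode : PrimrecPred (· ∈ Set.range ratCode) := by
  have num : Primrec fun k : ℕ => k.unpair.1 := Primrec.fst.comp Primrec.unpair
  have den : Primrec fun k : ℕ => k.unpair.2 := Primrec.snd.comp Primrec.unpair
  have not_dvd_num : PrimrecPred fun z : ℕ × ℕ => ¬ (z.2.unpair.1 + 1) / 2 % z.1 = 0 :=
    (Primrec.eq.comp (Primrec.nat_mod.comp (Primrec.nat_div.comp
      (Primrec.succ.comp (num.comp Primrec.snd)) (Primrec.const 2)) Primrec.fst)
      (Primrec.const 0)).not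
  have not_dvd_den : PrimrecPred fun z : ℕ × ℕ => ¬ z.2.unpair.2 % z.1 = 0 :=
    (Primrec.eq.comp (Primrec.nat_mod.comp (den.comp Primrec.snd) Primrec.fst)
      (Primrec.const 0)).not
  have no_common_divisor : PrimrecRel fun g k : ℕ =>
      (k.unpair.1 + 1) / 2 % g = 0 → k.unpair.2 % g = 0 → g = 1 :=
    (not_dvd_num.or (not_dvd_den.or (Primrec.eq.comp Primrec.fst (Primrec.const 1)))).of_eq
      fun z => by tauto
  exact ((Primrec.nat_lt.comp (Primrec.const 0) den).and
    (no_common_divisor.forall_lt.comp (Primrec.succ.comp den) Primrec.id)).of_eq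
      fun k => mem_range_ratCode.symm

open scoped Classical in
/-- The `Primcodable` instance of `ℚ` does not use `Rat.instEncodable`, which is `ratCode`, but
renumbers the rationals in the order of their codes. -/
theorem encode_rat_eq_countP (q : ℚ) :
    @Encodable.encode ℚ Primcodable.toEncodable q =
      (List.range (ratCode q)).countP (· ∈ Set.range ratCode) := by
  have h : @Encodable.encode ℚ Primcodable.toEncodable q = @List.countP ℕ
      (fun k => @decide (k ∈ Set.range (@Encodable.encode ℚ Rat.instEncodable))
        (Encodable.decidableRangeEncode ℚ k)) (List.range (ratCode q)) := rfl
  rw [h]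
  congr 1
  ext k
  exact decide_eq_decide.2 Iff.rfl

open scoped Classical in
theorem computable_ratCode : Computable ratCode := by
  have count : Primrec fun n => (List.range n).countP (· ∈ Set.range ratCode) :=
    (Primrec.list_length.comp
      ((Primrec.listFilter primrecPred_mem_range_ratCode).comp Primrec.list_range)).of_eq
        fun n => by rw [List.countP_eq_length_filter]
  have search : PrimrecPred fun z : ℚ × ℕ => z.2 ∈ Set.range ratCode ∧
      @Encodable.encode ℚ Primcodable.toEncodable z.1 =
        (List.range z.2).countP (· ∈ Set.range ratCode) :=
    (primrecPred_mem_range_ratCode.comp Primrec.snd).and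
      (Primrec.eq.comp (Primrec.encode.comp Primrec.fst) (count.comp Primrec.snd))
  obtain ⟨φ, hφ, hmem⟩ := exists_partrec_isLeast
    (P := fun q k => k ∈ Set.range ratCode ∧ @Encodable.encode ℚ Primcodable.toEncodable q =
      (List.range k).countP (· ∈ Set.range ratCode)) search.computablePred
  refine hφ.of_eq_tot fun q =>
    (hmem q _).2 ⟨⟨Set.mem_range_self q, encode_rat_eq_countP q⟩, ?_⟩
  rintro _ ⟨⟨r, rfl⟩, hr⟩
  rw [← encode_rat_eq_countP] at hr
  rw [@Encodable.encode_injective ℚ Primcodable.toEncodable _ _ hr]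

theorem computable_rat_den : Computable Rat.den :=
  (Computable.snd.comp (Computable.unpair.comp computable_ratCode)).of_eq fun q => by
    simp [ratCode]

theorem computable_rat_num_toNat : Computable fun q : ℚ => q.num.toNat := by
  have num : Primrec fun k : ℕ => k.unpair.1 := Primrec.fst.comp Primrec.unpair
  have toNat : Primrec fun k : ℕ => if k.unpair.1 % 2 = 0 then k.unpair.1 / 2 else 0 :=
    Primrec.ite (Primrec.eq.comp (Primrec.nat_mod.comp num (Primrec.const 2)) (Primrec.const 0))
      (Primrec.nat_div.comp num (Primrec.const 2)) (Primrec.const 0)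
  exact (toNat.to_comp.comp computable_ratCode).of_eq fun q => by
    rw [toNat_eq_ite_encode, ratCode, Nat.unpair_pair]

theorem computable_pnat_two_pow : Computable fun n : ℕ => (2 ^ n : ℕ+) := by
  have ofNat : Primrec fun n : ℕ => Denumerable.ofNat ℕ+ (2 ^ n - 1) :=
    (Primrec.ofNat ℕ+).comp (Primrec.nat_sub.comp primrec_two_pow (Primrec.const 1))
  refine ofNat.to_comp.of_eq fun n => PNat.eq ?_
  change 2 ^ n - 1 + 1 = ((2 ^ n : ℕ+) : ℕ)
  rw [Nat.sub_add_cancel Nat.one_le_two_pow, PNat.pow_coe]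
  rfl

theorem num_toNat_div_den (q : ℚ) : (q.num.toNat : ℝ) / q.den = max (q : ℝ) 0 := by
  have max_num : (q.num.toNat : ℝ) = max (q.num : ℝ) 0 := by exact_mod_cast q.num.ofNat_toNat
  rw [max_num, ← max_div_div_right (Nat.cast_nonneg _), zero_div, Rat.cast_def]

theorem ComputableReal.exists_computable_dyadic {α : ℝ} (hα : ComputableReal α) (h0 : 0 ≤ α) :
    ∃ b : ℕ → ℕ, Computable b ∧ ∀ n, (b n : ℝ) ≤ α * 2 ^ n ∧ α * 2 ^ n ≤ b n + 3 := by
  obtain ⟨f, hf, happrox⟩ := hα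
  have hq : Computable fun n : ℕ => f (2 ^ n) := hf.comp computable_pnat_two_pow
  have num : Computable fun n : ℕ => (f (2 ^ n)).num.toNat * 2 ^ n :=
    Primrec.nat_mul.to_comp.comp (computable_rat_num_toNat.comp hq) primrec_two_pow.to_comp
  have quot : Computable fun n : ℕ => (f (2 ^ n)).num.toNat * 2 ^ n / (f (2 ^ n)).den :=
    Primrec.nat_div.to_comp.comp num (computable_rat_den.comp hq)
  refine ⟨fun n => (f (2 ^ n)).num.toNat * 2 ^ n / (f (2 ^ n)).den - 1,
    Primrec.nat_sub.to_comp.comp quot (Computable.const 1), fun n => ?_⟩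
  set q := f (2 ^ n)
  set N := q.num.toNat * 2 ^ n / q.den
  have scaled : ((q.num.toNat * 2 ^ n : ℕ) : ℝ) / q.den = max (q : ℝ) 0 * 2 ^ n := by
    rw [← num_toNat_div_den]; push_cast; ring
  have N_eq_floor : N = ⌊max (q : ℝ) 0 * 2 ^ n⌋₊ := by
    rw [← scaled, Nat.floor_div_eq_div]
  have N_le : (N : ℝ) ≤ max (q : ℝ) 0 * 2 ^ n := N_eq_floor ▸ Nat.floor_le (by positivity)
  have lt_N : max (q : ℝ) 0 * 2 ^ n < N + 1 := N_eq_floor ▸ Nat.lt_floor_add_one _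
  have close : |α - max (q : ℝ) 0| * 2 ^ n < 1 := by
    have h := happrox (2 ^ n)
    rw [PNat.pow_coe, Nat.cast_pow] at h
    have hle : |α - max (q : ℝ) 0| ≤ |α - q| := by
      conv_lhs => rw [← max_eq_left h0]
      exact abs_max_sub_max_le_abs _ _ _
    rw [← lt_div_iff₀ (by positivity)]
    exact hle.trans_lt h
  rw [← abs_of_pos (show (0 : ℝ) < 2 ^ n by positivity), ← abs_mul, sub_mul, abs_lt] at close
  change ((N - 1 : ℕ) : ℝ) ≤ α * 2 ^ n ∧ α * 2 ^ n ≤ ((N - 1 : ℕ) : ℝ) + 3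
  rcases Nat.eq_zero_or_pos N with hN0 | hN0
  · rw [hN0] at lt_N ⊢
    rw [Nat.zero_sub, Nat.cast_zero] at *
    exact ⟨by positivity, by linarith⟩
  · rw [Nat.cast_sub hN0]
    push_cast
    constructor <;> linarith

end Computability

section Enumeration

open Nat.Partrec (Code)
open Encodable (encode decode decode₂)

/-- A computable exhaustion of the graph of `U` by finite stages, as duplicate-free lists of pairs
of a program and its output. -/
structure StagedEnumeration (U : List Bool →. List Bool) where
  stage : ℕ → List (List Bool × List Bool)
  computable_stage : Computable stage
  nodup_stage : ∀ k, ((stage k).map Prod.fst).Nodup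
  stage_subset : ∀ {k k'}, k ≤ k' → stage k ⊆ stage k'
  mem_iff : ∀ {p s}, s ∈ U p ↔ ∃ k, (p, s) ∈ stage k

/-- The program with number `i`, paired with its output, if `c` halts on it within `k` steps. -/
def haltingPair (c : Code) (k i : ℕ) : Option (List Bool × List Bool) :=
  (decode₂ (List Bool) i).bind fun p => ((c.evaln k i).bind decode).map fun s => (p, s)

/-- The program-output pairs of `c` found within `k` steps. -/
def haltingPairs (c : Code) (k : ℕ) : List (List Bool × List Bool) :=
  (List.range k).filterMap (haltingPair c k)

theorem primrec_haltingPairs (c : Code) : Primrec (haltingPairs c) := by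
  refine Primrec.listFilterMap Primrec.list_range (Primrec.option_bind
    (Primrec.decode₂.comp Primrec.snd) (Primrec.option_map (Primrec.option_bind ?_ ?_) ?_))
  · exact Code.primrec_evaln.comp
      (((Primrec.fst.comp Primrec.fst).pair (Primrec.const c)).pair (Primrec.snd.comp Primrec.fst))
  · exact Primrec.decode.comp Primrec.snd
  · exact (Primrec.snd.comp Primrec.fst).pair Primrec.snd

theorem haltingPair_eq_some {c : Code} {k i : ℕ} {p s : List Bool} :
    haltingPair c k i = some (p, s) ↔ encode p = i ∧ ∃ o ∈ c.evaln k i, decode o = some s := by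
  simp only [haltingPair, Option.bind_eq_some_iff, Option.map_eq_some_iff, Prod.mk.injEq]
  constructor
  · rintro ⟨_, hp, _, ho, rfl, rfl⟩
    exact ⟨Encodable.mem_decode₂.1 hp, ho⟩
  · rintro ⟨hp, ho⟩
    exact ⟨p, Encodable.mem_decode₂.2 hp, s, ho, rfl, rfl⟩

theorem nodup_haltingPairs (c : Code) (k : ℕ) : ((haltingPairs c k).map Prod.fst).Nodup := by
  rw [haltingPairs, List.map_filterMap]
  refine List.nodup_range.filterMap fun i i' p hi hi' => ?_
  obtain ⟨⟨q, s⟩, hq, rfl : q = p⟩ := Option.map_eq_some_iff.1 hi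
  obtain ⟨⟨q', s'⟩, hq', rfl : q' = q⟩ := Option.map_eq_some_iff.1 hi'
  exact (haltingPair_eq_some.1 hq).1.symm.trans (haltingPair_eq_some.1 hq').1

variable {U : List Bool →. List Bool}

theorem mem_haltingPairs {c : Code} (hc : ∀ p, c.eval (encode p) = (U p).map encode) {k : ℕ}
    {p s : List Bool} : (p, s) ∈ haltingPairs c k ↔ encode s ∈ c.evaln k (encode p) := by
  simp only [haltingPairs, List.mem_filterMap, List.mem_range, haltingPair_eq_some]
  constructor
  · rintro ⟨_, -, rfl, o, ho, hs⟩
    have output := Code.evaln_sound ho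
    rw [hc] at output
    obtain ⟨s', -, rfl⟩ := (Part.mem_map_iff _).1 output
    rw [Encodable.encodek, Option.some_inj] at hs
    exact hs ▸ ho
  · exact fun h => ⟨encode p, Code.evaln_bound h, rfl, _, h, Encodable.encodek s⟩

theorem nonempty_stagedEnumeration_of_partrec (hU : Partrec U) :
    Nonempty (StagedEnumeration U) := by
  obtain ⟨c, hc⟩ := Code.exists_code.1 hU
  replace hc (p : List Bool) : c.eval (encode p) = (U p).map encode := by simp [hc]
  refine ⟨haltingPairs c, (primrec_haltingPairs c).to_comp, nodup_haltingPairs c, ?_, ?_⟩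
  · rintro k k' hk ⟨p, s⟩ h
    exact (mem_haltingPairs hc).2 (Code.evaln_mono hk ((mem_haltingPairs hc).1 h))
  · intro p s
    simp only [mem_haltingPairs hc, ← Code.evaln_complete, hc]
    exact ((Part.mem_map_iff _).trans ⟨fun ⟨_, h, e⟩ => Encodable.encode_injective e ▸ h,
      fun h => ⟨s, h, rfl⟩⟩).symm

namespace StagedEnumeration

variable (E : StagedEnumeration U)

/-- The enumeration that starts at stage `m` of `E`. -/
def delay (m : ℕ) : StagedEnumeration U where
  stage k := E.stage (m + k)
  computable_stage := E.computable_stage.comp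
    (Primrec.nat_add.to_comp.comp (Computable.const m) Computable.id)
  nodup_stage k := E.nodup_stage (m + k)
  stage_subset h := E.stage_subset (Nat.add_le_add_left h m)
  mem_iff := E.mem_iff.trans ⟨fun ⟨k, h⟩ => ⟨k, E.stage_subset (Nat.le_add_left k m) h⟩,
    fun ⟨k, h⟩ => ⟨m + k, h⟩⟩

/-- The programs enumerated by stage `k`. -/
def programs (k : ℕ) : Finset (List Bool) := ((E.stage k).map Prod.fst).toFinset

/-- A string that is not among the outputs at stage `k`, being longer than each of them. -/
def newString (k : ℕ) : List Bool := true :: ((E.stage k).map Prod.snd).flatten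

variable {k k' : ℕ} {p : List Bool}

theorem mem_programs : p ∈ E.programs k ↔ ∃ s, (p, s) ∈ E.stage k := by simp [programs]

theorem programs_mono : Monotone E.programs := fun _ _ hk _ hp =>
  have ⟨s, hs⟩ := E.mem_programs.1 hp
  E.mem_programs.2 ⟨s, E.stage_subset hk hs⟩

theorem dom_of_mem_programs (hp : p ∈ E.programs k) : (U p).Dom :=
  have ⟨_, hs⟩ := E.mem_programs.1 hp
  Part.dom_iff_mem.2 ⟨_, E.mem_iff.2 ⟨k, hs⟩⟩

theorem exists_subset_programs {S : Finset (List Bool)} (hS : ∀ p ∈ S, (U p).Dom) :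
    ∃ k, S ⊆ E.programs k := by
  induction S using Finset.induction_on with
  | empty => exact ⟨0, Finset.empty_subset _⟩
  | insert p S _ ih =>
    obtain ⟨k, hk⟩ := ih fun q hq => hS q (Finset.mem_insert_of_mem hq)
    obtain ⟨s, hs⟩ := Part.dom_iff_mem.1 (hS p (Finset.mem_insert_self p S))
    obtain ⟨k', hk'⟩ := E.mem_iff.1 hs
    exact ⟨max k k', Finset.insert_subset
      (E.programs_mono (le_max_right k k') (E.mem_programs.2 ⟨s, hk'⟩))
      (hk.trans (E.programs_mono (le_max_left k k')))⟩

theorem exists_lt_partitionSum_programs (hU : PrefixFree U) {t x : ℝ} (ht : 0 < t) (ht1 : t ≤ 1)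
    (hx : x < Zfun U t) : ∃ k, x < partitionSum (E.programs k) t := by
  obtain ⟨S, hS, hxS⟩ := exists_lt_partitionSum hU ht ht1 hx
  obtain ⟨k, hk⟩ := E.exists_subset_programs hS
  exact ⟨k, hxS.trans_le (partitionSum_mono hk t)⟩

theorem notMem_programs_of_newString_mem (h : E.newString k ∈ U p) : p ∉ E.programs k := by
  intro hp
  obtain ⟨s, hs⟩ := E.mem_programs.1 hp
  obtain rfl := Part.mem_unique h (E.mem_iff.2 ⟨k, hs⟩)
  have hle := (List.sublist_flatten_of_mem (List.mem_map_of_mem (f := Prod.snd) hs)).length_le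
  rw [newString, List.length_cons] at hle
  omega

theorem computable_newString : Computable E.newString := by
  have outputs : Primrec fun L : List (List Bool × List Bool) => (L.map Prod.snd).flatten :=
    Primrec.list_flatten.comp (Primrec.list_map Primrec.id (Primrec.snd.comp Primrec.snd))
  exact (Primrec.list_cons.comp (Primrec.const true) outputs).to_comp.comp E.computable_stage

end StagedEnumeration

end Enumeration

section DyadicTruncation

/-- The integer part of `2 ^ m * 2 ^ (-l / t)` at the dyadic temperature `t = a / 2 ^ n`, for
`0 < a`. -/
def truncatedWeight (m n a l : ℕ) : ℕ :=
  Nat.findGreatest (fun x => x ^ a * 2 ^ (l * 2 ^ n) ≤ 2 ^ (m * a)) (2 ^ m)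

theorem primrec_truncatedWeight :
    Primrec fun z : (ℕ × ℕ × ℕ) × ℕ => truncatedWeight z.1.1 z.1.2.1 z.1.2.2 z.2 := by
  have m : Primrec fun z : ((ℕ × ℕ × ℕ) × ℕ) × ℕ => z.1.1.1 :=
    Primrec.fst.comp (Primrec.fst.comp Primrec.fst)
  have n : Primrec fun z : ((ℕ × ℕ × ℕ) × ℕ) × ℕ => z.1.1.2.1 :=
    Primrec.fst.comp (Primrec.snd.comp (Primrec.fst.comp Primrec.fst))
  have a : Primrec fun z : ((ℕ × ℕ × ℕ) × ℕ) × ℕ => z.1.1.2.2 :=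
    Primrec.snd.comp (Primrec.snd.comp (Primrec.fst.comp Primrec.fst))
  have l : Primrec fun z : ((ℕ × ℕ × ℕ) × ℕ) × ℕ => z.1.2 := Primrec.snd.comp Primrec.fst
  refine Primrec.nat_findGreatest (primrec_two_pow.comp (Primrec.fst.comp Primrec.fst))
    (Primrec.nat_le.comp (Primrec.nat_mul.comp (primrec_pow.comp Primrec.snd a) ?_) ?_)
  · exact primrec_two_pow.comp (Primrec.nat_mul.comp l (primrec_two_pow.comp n))
  · exact primrec_two_pow.comp (Primrec.nat_mul.comp m a)

theorem primrec_sum_truncatedWeight :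
    Primrec fun z : (ℕ × ℕ × ℕ) × List (List Bool × List Bool) =>
      (z.2.map fun w => truncatedWeight z.1.1 z.1.2.1 z.1.2.2 w.1.length).sum := by
  have weight : Primrec₂ fun (z : (ℕ × ℕ × ℕ) × List (List Bool × List Bool))
      (w : List Bool × List Bool) => truncatedWeight z.1.1 z.1.2.1 z.1.2.2 w.1.length :=
    primrec_truncatedWeight.comp ((Primrec.fst.comp Primrec.fst).pair
      (Primrec.list_length.comp (Primrec.fst.comp Primrec.snd)))
  have add : Primrec₂ fun (_ : (ℕ × ℕ × ℕ) × List (List Bool × List Bool)) (u : ℕ × ℕ) =>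
      u.1 + u.2 :=
    Primrec.nat_add.comp (Primrec.fst.comp Primrec.snd) (Primrec.snd.comp Primrec.snd)
  exact (Primrec.list_foldr (Primrec.list_map Primrec.snd weight) (Primrec.const 0) add).of_eq
    fun _ => List.sum_eq_foldr.symm

theorem truncatedWeight_eq_floor {a : ℕ} (ha : 0 < a) (m n l : ℕ) :
    truncatedWeight m n a l = ⌊(2 : ℝ) ^ m * 2 ^ (-(l : ℝ) / (a / 2 ^ n))⌋₊ := by
  set y : ℝ := (2 : ℝ) ^ m * 2 ^ (-(l : ℝ) / (a / 2 ^ n)) with hy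
  have y_nonneg : 0 ≤ y := by positivity
  have y_pow : y ^ a * 2 ^ (l * 2 ^ n) = 2 ^ (m * a) := by
    rw [hy, mul_pow, ← pow_mul, mul_assoc, ← Real.rpow_mul_natCast two_pos.le,
      ← Real.rpow_natCast 2 (l * 2 ^ n), ← Real.rpow_add two_pos]
    have cancel : -(l : ℝ) / (a / 2 ^ n) * a + ((l * 2 ^ n : ℕ) : ℝ) = 0 := by
      push_cast
      field_simp
      ring
    rw [cancel, Real.rpow_zero, mul_one]
  have le_iff (x : ℕ) : x ^ a * 2 ^ (l * 2 ^ n) ≤ 2 ^ (m * a) ↔ (x : ℝ) ≤ y := by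
    rw [← Nat.cast_le (α := ℝ)]
    push_cast
    rw [← y_pow, mul_le_mul_iff_left₀ (by positivity),
      pow_le_pow_iff_left₀ (Nat.cast_nonneg x) y_nonneg ha.ne']
  have y_le : y ≤ 2 ^ m := mul_le_of_le_one_right (by positivity)
    (Real.rpow_le_one_of_one_le_of_nonpos one_le_two
      (div_nonpos_of_nonpos_of_nonneg (neg_nonpos.2 (Nat.cast_nonneg l)) (by positivity)))
  refine (Nat.findGreatest_eq_iff).2 ⟨Nat.floor_le_of_le (by exact_mod_cast y_le), fun _ => ?_,
    fun x hx _ => ?_⟩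
  · exact (le_iff _).2 (Nat.floor_le y_nonneg)
  · rw [le_iff]
    exact not_le.2 (Nat.lt_of_floor_lt hx)

namespace StagedEnumeration

variable {U : List Bool →. List Bool} (E : StagedEnumeration U)

/-- The number of binary digits that makes `truncatedSum` exact up to `2 ^ (-e)`. -/
def precision (e k : ℕ) : ℕ := e + (E.stage k).length

/-- The partition sum of stage `k` at temperature `a / 2 ^ n`, each term being truncated to
`E.precision e k` binary digits, in units of the last digit. -/
def truncatedSum (e n a k : ℕ) : ℕ :=
  ((E.stage k).map fun z => truncatedWeight (E.precision e k) n a z.1.length).sum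

theorem computable_precision : Computable₂ E.precision :=
  Primrec.nat_add.to_comp.comp Computable.fst
    (Primrec.list_length.to_comp.comp (E.computable_stage.comp Computable.snd))

theorem computable_truncatedSum :
    Computable fun z : (ℕ × ℕ × ℕ) × ℕ => E.truncatedSum z.1.1 z.1.2.1 z.1.2.2 z.2 := by
  have precision : Computable fun z : (ℕ × ℕ × ℕ) × ℕ => E.precision z.1.1 z.2 :=
    E.computable_precision.comp (Computable.fst.comp Computable.fst) Computable.snd
  have parameters : Computable fun z : (ℕ × ℕ × ℕ) × ℕ =>
      ((E.precision z.1.1 z.2, z.1.2), E.stage z.2) :=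
    (precision.pair (Computable.snd.comp Computable.fst)).pair
      (E.computable_stage.comp Computable.snd)
  have sum := primrec_sum_truncatedWeight.to_comp.comp parameters
  exact sum

theorem partitionSum_programs_eq_sum_map (k : ℕ) (t : ℝ) :
    partitionSum (E.programs k) t =
      ((E.stage k).map fun z => (2 : ℝ) ^ (-(z.1.length : ℝ) / t)).sum := by
  rw [partitionSum, programs, List.sum_toFinset _ (E.nodup_stage k), List.map_map]
  rfl

variable {a : ℕ}

theorem truncatedSum_div_le (ha : 0 < a) (e n k : ℕ) :
    (E.truncatedSum e n a k : ℝ) / 2 ^ E.precision e k ≤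
      partitionSum (E.programs k) (a / 2 ^ n) := by
  rw [div_le_iff₀' (by positivity), partitionSum_programs_eq_sum_map, truncatedSum,
    ← List.sum_map_mul_left, Nat.cast_list_sum, List.map_map]
  refine List.sum_le_sum fun z _ => ?_
  rw [Function.comp_apply, truncatedWeight_eq_floor ha]
  exact Nat.floor_le (by positivity)

theorem partitionSum_le_truncatedSum_div_add (ha : 0 < a) (e n k : ℕ) :
    partitionSum (E.programs k) (a / 2 ^ n) ≤
      (E.truncatedSum e n a k : ℝ) / 2 ^ E.precision e k + 1 / 2 ^ e := by
  have rounding : (2 : ℝ) ^ E.precision e k * partitionSum (E.programs k) (a / 2 ^ n) ≤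
      E.truncatedSum e n a k + (E.stage k).length := by
    rw [partitionSum_programs_eq_sum_map, truncatedSum, ← List.sum_map_mul_left, Nat.cast_list_sum,
      List.map_map]
    calc _ ≤ ((E.stage k).map fun z =>
          (truncatedWeight (E.precision e k) n a z.1.length : ℝ) + 1).sum := by
          refine List.sum_le_sum fun z _ => ?_
          rw [truncatedWeight_eq_floor ha]
          exact (Nat.lt_floor_add_one _).le
      _ = _ := by
          rw [List.sum_map_add, List.map_const', List.sum_replicate, nsmul_one]
          rfl
  have length_le : ((E.stage k).length : ℝ) ≤ 2 ^ (E.stage k).length := by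
    exact_mod_cast Nat.lt_two_pow_self.le
  rw [← mul_le_mul_iff_right₀ (show (0 : ℝ) < 2 ^ E.precision e k by positivity)]
  calc _ ≤ (E.truncatedSum e n a k : ℝ) + 2 ^ (E.stage k).length :=
        rounding.trans (add_le_add_right length_le _)
    _ = _ := by
        rw [precision, pow_add]
        field_simp

end StagedEnumeration

end DyadicTruncation

section Tests

/-- The data that the two halves of the theorem compute with: an enumeration of `U` whose initial
stage contains a shortest program and a further one, and the free energy at `T` approximated
from below by dyadic rationals `energy n / 2 ^ n`. -/
structure FreeEnergyData (U : List Bool →. List Bool) (T : ℝ) extends StagedEnumeration U where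
  shortest : List Bool
  other : List Bool
  shortest_mem : shortest ∈ toStagedEnumeration.programs 0
  other_mem : other ∈ toStagedEnumeration.programs 0
  shortest_ne_other : shortest ≠ other
  length_shortest_le : ∀ p, (U p).Dom → shortest.length ≤ p.length
  energy : ℕ → ℕ
  computable_energy : Computable energy
  energy_le : ∀ n, (energy n : ℝ) ≤ Ffun U T * 2 ^ n
  le_energy_add : ∀ n, Ffun U T * 2 ^ n ≤ energy n + 3

namespace FreeEnergyData

variable {U : List Bool →. List Bool} {T : ℝ} (D : FreeEnergyData U T)

/-- Decidable evidence that at temperature `a / 2 ^ n` the programs of stage `k` have free energy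
below that of `U` at temperature `T`: with `N / 2 ^ m` the truncated partition sum, the inequality
says `-(a / 2 ^ n) * logb 2 (N / 2 ^ m) < D.energy n / 2 ^ n`. -/
def EnergyTest (n a k : ℕ) : Prop :=
  0 < a ∧ 2 ^ (D.precision n k * a) < D.truncatedSum n n a k ^ a * 2 ^ D.energy n

/-- Decidable evidence that the programs of stage `k` have total mass (the partition sum at
temperature `1`) above `r / 2 ^ w`. -/
def MassTest (w r k : ℕ) : Prop :=
  r * 2 ^ D.precision k k < 2 ^ w * D.truncatedSum k 0 1 k

theorem computablePred_energyTest :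
    ComputablePred fun z : (ℕ × ℕ) × ℕ => D.EnergyTest z.1.1 z.1.2 z.2 := by
  have n : Computable fun z : (ℕ × ℕ) × ℕ => z.1.1 := Computable.fst.comp Computable.fst
  have a : Computable fun z : (ℕ × ℕ) × ℕ => z.1.2 := Computable.snd.comp Computable.fst
  have precision : Computable fun z : (ℕ × ℕ) × ℕ => D.precision z.1.1 z.2 :=
    D.computable_precision.comp n Computable.snd
  have sum := D.computable_truncatedSum.comp ((n.pair (n.pair a)).pair Computable.snd)
  have lhs : Computable fun z : (ℕ × ℕ) × ℕ => 2 ^ (D.precision z.1.1 z.2 * z.1.2) :=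
    primrec_two_pow.to_comp.comp (Primrec.nat_mul.to_comp.comp precision a)
  have rhs : Computable fun z : (ℕ × ℕ) × ℕ =>
      D.truncatedSum z.1.1 z.1.1 z.1.2 z.2 ^ z.1.2 * 2 ^ D.energy z.1.1 :=
    Primrec.nat_mul.to_comp.comp (primrec_pow.to_comp.comp sum a)
      (primrec_two_pow.to_comp.comp (D.computable_energy.comp n))
  have decision : PrimrecPred fun z : ℕ × ℕ × ℕ => 0 < z.1 ∧ z.2.1 < z.2.2 :=
    (Primrec.nat_lt.comp (Primrec.const 0) Primrec.fst).and
      (Primrec.nat_lt.comp (Primrec.fst.comp Primrec.snd) (Primrec.snd.comp Primrec.snd))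
  exact ComputablePred.computable_of_manyOneReducible
    ⟨_, a.pair (lhs.pair rhs), fun _ => Iff.rfl⟩ decision.computablePred

theorem computablePred_massTest :
    ComputablePred fun z : (ℕ × ℕ) × ℕ => D.MassTest z.1.1 z.1.2 z.2 := by
  have w : Computable fun z : (ℕ × ℕ) × ℕ => z.1.1 := Computable.fst.comp Computable.fst
  have r : Computable fun z : (ℕ × ℕ) × ℕ => z.1.2 := Computable.snd.comp Computable.fst
  have k : Computable fun z : (ℕ × ℕ) × ℕ => z.2 := Computable.snd
  have sum := D.computable_truncatedSum.comp
    ((k.pair ((Computable.const 0).pair (Computable.const 1))).pair k)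
  have lhs : Computable fun z : (ℕ × ℕ) × ℕ => z.1.2 * 2 ^ D.precision z.2 z.2 :=
    Primrec.nat_mul.to_comp.comp r
      (primrec_two_pow.to_comp.comp (D.computable_precision.comp k k))
  have rhs : Computable fun z : (ℕ × ℕ) × ℕ => 2 ^ z.1.1 * D.truncatedSum z.2 0 1 z.2 :=
    Primrec.nat_mul.to_comp.comp (primrec_two_pow.to_comp.comp w) sum
  exact ComputablePred.computable_of_manyOneReducible
    ⟨_, lhs.pair rhs, fun _ => Iff.rfl⟩ Primrec.nat_lt.computablePred

theorem massTest_iff {w r k : ℕ} : D.MassTest w r k ↔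
    (r : ℝ) / 2 ^ w < (D.truncatedSum k 0 1 k : ℝ) / 2 ^ D.precision k k := by
  rw [MassTest, div_lt_div_iff₀ (by positivity) (by positivity), ← Nat.cast_lt (α := ℝ),
    mul_comm (2 ^ w)]
  push_cast
  rfl

theorem MassTest.lt_partitionSum {w r k : ℕ} (h : D.MassTest w r k) :
    (r : ℝ) / 2 ^ w < partitionSum (D.programs k) 1 := by
  have trunc := D.truncatedSum_div_le one_pos k 0 k
  rw [Nat.cast_one, pow_zero, div_one] at trunc
  exact (D.massTest_iff.1 h).trans_le trunc

theorem exists_massTest (hU : PrefixFree U) {w r : ℕ} (h : (r : ℝ) / 2 ^ w < Zfun U 1) :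
    ∃ k, D.MassTest w r k := by
  obtain ⟨x, hrx, hxZ⟩ := exists_between h
  obtain ⟨k₀, hk₀⟩ := D.exists_lt_partitionSum_programs hU one_pos le_rfl hxZ
  obtain ⟨e, he⟩ := exists_pow_lt_of_lt_one (sub_pos.2 hrx) (one_half_lt_one (α := ℝ))
  refine ⟨max k₀ e, D.massTest_iff.2 ?_⟩
  set k := max k₀ e
  have trunc := D.partitionSum_le_truncatedSum_div_add one_pos k 0 k
  rw [Nat.cast_one, pow_zero, div_one] at trunc
  have mass := partitionSum_mono (D.programs_mono (le_max_left k₀ e)) 1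
  have small : (1 : ℝ) / 2 ^ k ≤ (1 / 2) ^ e := by
    rw [← one_div_pow]
    exact pow_le_pow_of_le_one (by norm_num) (by norm_num) (le_max_right k₀ e)
  linarith

theorem energyTest_iff {n a k : ℕ} (ha : 0 < a) : D.EnergyTest n a k ↔
    0 < D.truncatedSum n n a k ∧
      -(a / 2 ^ n) * Real.logb 2 (D.truncatedSum n n a k / 2 ^ D.precision n k) * 2 ^ n <
        D.energy n := by
  rw [EnergyTest, and_iff_right ha]
  set N := D.truncatedSum n n a k
  set m := D.precision n k
  rcases Nat.eq_zero_or_pos N with hN | hN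
  · simp [hN, ha.ne']
  · have logs : (2 : ℝ) ^ (m * a) < N ^ a * 2 ^ D.energy n ↔
        (m * a : ℝ) < a * Real.logb 2 N + D.energy n := by
      rw [← Real.logb_lt_logb_iff one_lt_two (by positivity) (by positivity),
        Real.logb_mul (by positivity) (by positivity)]
      simp [Real.logb_pow]
    have expand : -(a / 2 ^ n : ℝ) * Real.logb 2 (N / 2 ^ m) * 2 ^ n =
        m * a - a * Real.logb 2 N := by
      rw [Real.logb_div (by positivity) (by positivity), Real.logb_pow,
        Real.logb_self_eq_one one_lt_two]
      field_simp
      ring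
    rw [expand, and_iff_right hN, sub_lt_iff_lt_add', ← logs, ← Nat.cast_lt (α := ℝ)]
    push_cast
    rfl

theorem EnergyTest.partialFreeEnergy_lt {n a k : ℕ} (h : D.EnergyTest n a k) :
    partialFreeEnergy (D.programs k) (a / 2 ^ n) < Ffun U T := by
  obtain ⟨hN, hlog⟩ := (D.energyTest_iff h.1).1 h
  have ha : 0 < a := h.1
  have log_le := Real.logb_le_logb_of_le one_lt_two (by positivity)
    (D.truncatedSum_div_le ha n n k)
  have temp_nonneg : (0 : ℝ) ≤ a / 2 ^ n := by positivity
  refine lt_of_le_of_lt ?_ (lt_of_mul_lt_mul_right (hlog.trans_le (D.energy_le n)) (by positivity))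
  rw [partialFreeEnergy, neg_mul, neg_mul]
  exact neg_le_neg (mul_le_mul_of_nonneg_left log_le temp_nonneg)

end FreeEnergyData

end Tests

section TemperatureBounds

namespace FreeEnergyData

variable {U : List Bool →. List Bool} {T : ℝ} (D : FreeEnergyData U T) {n a k : ℕ}

/-- The contribution of the shortest program to the partition function at temperature `T`. -/
noncomputable def minWeight : ℝ := 2 ^ (-(D.shortest.length : ℝ) / T)

theorem minWeight_pos : 0 < D.minWeight := by rw [minWeight]; positivity

theorem shortest_mem_programs (k : ℕ) : D.shortest ∈ D.programs k :=
  D.programs_mono (Nat.zero_le k) D.shortest_mem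

theorem other_mem_programs (k : ℕ) : D.other ∈ D.programs k :=
  D.programs_mono (Nat.zero_le k) D.other_mem

theorem length_shortest_le_of_mem {p : List Bool} (hp : p ∈ D.programs k) :
    D.shortest.length ≤ p.length :=
  D.length_shortest_le p (D.dom_of_mem_programs hp)

theorem minWeight_le_partitionSum (k : ℕ) : D.minWeight ≤ partitionSum (D.programs k) T :=
  rpow_le_partitionSum (D.shortest_mem_programs k) T

theorem Ffun_le_partialFreeEnergy (hU : PrefixFree U) (hT : 0 < T) (hT1 : T ≤ 1) (k : ℕ) :
    Ffun U T ≤ partialFreeEnergy (D.programs k) T := by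
  have log_le := Real.logb_le_logb_of_le one_lt_two
    (partitionSum_pos (D.shortest_mem_programs k) T)
    (partitionSum_le_Zfun hU (fun _ => D.dom_of_mem_programs) hT hT1)
  rw [Ffun, partialFreeEnergy, neg_mul, neg_mul]
  exact neg_le_neg (mul_le_mul_of_nonneg_left log_le hT.le)

theorem partialFreeEnergy_sub_Ffun_le (hU : PrefixFree U) (hT : 0 < T) (hT1 : T ≤ 1) (k : ℕ) :
    partialFreeEnergy (D.programs k) T - Ffun U T ≤
      2 / D.minWeight * (Zfun U T - partitionSum (D.programs k) T) := by
  have Z_pos := partitionSum_pos (D.shortest_mem_programs k) T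
  have Z_le := partitionSum_le_Zfun hU (fun _ => D.dom_of_mem_programs (k := k)) hT hT1
  have log_sub_nonneg := sub_nonneg.2 (Real.logb_le_logb_of_le one_lt_two Z_pos Z_le)
  calc partialFreeEnergy (D.programs k) T - Ffun U T
      = T * (Real.logb 2 (Zfun U T) - Real.logb 2 (partitionSum (D.programs k) T)) := by
        rw [partialFreeEnergy, Ffun]; ring
    _ ≤ Real.logb 2 (Zfun U T) - Real.logb 2 (partitionSum (D.programs k) T) :=
        mul_le_of_le_one_left log_sub_nonneg hT1
    _ ≤ 2 * ((Zfun U T - partitionSum (D.programs k) T) / partitionSum (D.programs k) T) :=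
        logb_two_sub_le Z_pos Z_le
    _ ≤ 2 * ((Zfun U T - partitionSum (D.programs k) T) / D.minWeight) :=
        mul_le_mul_of_nonneg_left (div_le_div_of_nonneg_left (sub_nonneg.2 Z_le) D.minWeight_pos
          (D.minWeight_le_partitionSum k)) two_pos.le
    _ = _ := by ring

theorem logb_partitionSum_sub_logb_truncatedSum_le (hT : 0 < T) (ha : 0 < a)
    (hTa : T ≤ a / 2 ^ n) (hn : 2 / 2 ^ n ≤ D.minWeight) :
    0 < D.truncatedSum n n a k ∧ Real.logb 2 (partitionSum (D.programs k) (a / 2 ^ n)) -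
      Real.logb 2 (D.truncatedSum n n a k / 2 ^ D.precision n k) ≤ 4 / D.minWeight / 2 ^ n := by
  set y : ℝ := D.truncatedSum n n a k / 2 ^ D.precision n k with hy
  have z_pos := D.minWeight_pos
  have y_le : y ≤ partitionSum (D.programs k) (a / 2 ^ n) := D.truncatedSum_div_le ha n n k
  have le_y : partitionSum (D.programs k) (a / 2 ^ n) ≤ y + 1 / 2 ^ n :=
    D.partitionSum_le_truncatedSum_div_add ha n n k
  have z_le : D.minWeight ≤ partitionSum (D.programs k) (a / 2 ^ n) :=
    (D.minWeight_le_partitionSum k).trans (partitionSum_le_of_le hT hTa)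
  have half_le_y : D.minWeight / 2 ≤ y := by
    have halve : (1 : ℝ) / 2 ^ n = 2 / 2 ^ n / 2 := by ring
    linarith
  have y_pos : 0 < y := (half_pos z_pos).trans_le half_le_y
  refine ⟨Nat.pos_of_ne_zero fun h0 => y_pos.ne' (by simp [hy, h0]), ?_⟩
  calc Real.logb 2 (partitionSum (D.programs k) (a / 2 ^ n)) - Real.logb 2 y
      ≤ 2 * ((partitionSum (D.programs k) (a / 2 ^ n) - y) / y) := logb_two_sub_le y_pos y_le
    _ ≤ 2 * (1 / 2 ^ n / (D.minWeight / 2)) := by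
      gcongr
      linarith
    _ = 4 / D.minWeight / 2 ^ n := by field_simp; norm_num

variable {D}

theorem EnergyTest.lt_temperature (hU : PrefixFree U) (hT : 0 < T) (hT1 : T ≤ 1)
    (h : D.EnergyTest n a k) : T < a / 2 ^ n := by
  by_contra! hle
  have anti := partialFreeEnergy_anti (D.shortest_mem_programs k)
    (fun _ => D.length_shortest_le_of_mem) (D.other_mem_programs k) D.shortest_ne_other
    (div_pos (Nat.cast_pos.2 h.1) (by positivity)) hle
  linarith [h.partialFreeEnergy_lt, D.Ffun_le_partialFreeEnergy hU hT hT1 k]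

theorem EnergyTest.Zfun_sub_partitionSum_le (hU : PrefixFree U) (hT : 0 < T) (hT1 : T < 1)
    (h : D.EnergyTest n a k) (ha : a ≤ 2 ^ n) :
    Zfun U T - partitionSum (D.programs k) T ≤ (a / 2 ^ n - T) / (T * (1 - T)) := by
  set t : ℝ := a / 2 ^ n
  have hTt : T < t := h.lt_temperature hU hT hT1.le
  have ht1 : t ≤ 1 := (div_le_one (by positivity)).2 (by exact_mod_cast ha)
  have mass_le_one := partitionSum_one_le_one hU fun _ => D.dom_of_mem_programs (k := k)
  have Zt_pos := partitionSum_pos (D.shortest_mem_programs k) t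
  have log_nonpos : Real.logb 2 (partitionSum (D.programs k) t) ≤ 0 :=
    Real.logb_nonpos one_lt_two Zt_pos.le
      ((partitionSum_le_of_le (hT.trans hTt) ht1).trans mass_le_one)
  have log_lt : Real.logb 2 (Zfun U T) < Real.logb 2 (partitionSum (D.programs k) t) := by
    have energy_lt := h.partialFreeEnergy_lt
    rw [Ffun, partialFreeEnergy, neg_mul, neg_mul, neg_lt_neg_iff] at energy_lt
    exact lt_of_mul_lt_mul_left
      (energy_lt.trans_le (mul_le_mul_of_nonpos_right hTt.le log_nonpos)) hT.le
  have Z_pos : 0 < Zfun U T := D.minWeight_pos.trans_le ((D.minWeight_le_partitionSum k).trans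
    (partitionSum_le_Zfun hU (fun _ => D.dom_of_mem_programs) hT hT1.le))
  rw [Real.logb_lt_logb_iff one_lt_two Z_pos Zt_pos] at log_lt
  exact (sub_le_sub_right log_lt.le _).trans
    (partitionSum_sub_le mass_le_one hT hT1 hTt.le ht1)

theorem energyTest_of_partialFreeEnergy_add_le (hT : 0 < T) (hTa : T ≤ a / 2 ^ n)
    (ha : a ≤ 2 ^ n) (hn : 2 / 2 ^ n ≤ D.minWeight)
    (h : partialFreeEnergy (D.programs k) (a / 2 ^ n) + (4 / D.minWeight + 4) / 2 ^ n ≤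
      Ffun U T) : D.EnergyTest n a k := by
  have t_pos : (0 : ℝ) < a / 2 ^ n := hT.trans_le hTa
  have a_pos : 0 < a := Nat.pos_of_ne_zero fun h0 => t_pos.ne' (by simp [h0])
  have t_le_one : (a : ℝ) / 2 ^ n ≤ 1 := (div_le_one (by positivity)).2 (by exact_mod_cast ha)
  obtain ⟨sum_pos, log_loss⟩ :=
    D.logb_partitionSum_sub_logb_truncatedSum_le hT a_pos hTa hn (k := k)
  refine (D.energyTest_iff a_pos).2 ⟨sum_pos, ?_⟩
  rw [← lt_div_iff₀ (by positivity)]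
  have energy_bound : Ffun U T ≤ D.energy n / 2 ^ n + 3 / 2 ^ n := by
    rw [← add_div, le_div_iff₀ (by positivity)]
    exact D.le_energy_add n
  have slack : (4 / D.minWeight + 4) / 2 ^ n = 4 / D.minWeight / 2 ^ n + 3 / 2 ^ n + 1 / 2 ^ n := by
    ring
  have unit_pos : (0 : ℝ) < 1 / 2 ^ n := by positivity
  have loss_nonneg : 0 ≤ 4 / D.minWeight / 2 ^ n := by
    have := D.minWeight_pos
    positivity
  have scaled_loss := (mul_le_mul_of_nonneg_left log_loss t_pos.le).trans
    (mul_le_of_le_one_left loss_nonneg t_le_one)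
  rw [partialFreeEnergy] at h
  linarith

end FreeEnergyData

end TemperatureBounds

section Randomness

theorem weaklyChaitinTRandom_of_eventually {U : List Bool →. List Bool} {T α : ℝ} {c : ℝ}
    (h : ∀ᶠ n : ℕ in atTop, T * n - c ≤ complexity U (firstBits α n)) :
    WeaklyChaitinTRandom U T α := by
  obtain ⟨n₀, hn₀⟩ := eventually_atTop.1 h
  refine ⟨⌈max c (|T| * n₀)⌉₊, fun n => ?_⟩
  have c_le : max c (|T| * n₀) ≤ ⌈max c (|T| * n₀)⌉₊ := Nat.le_ceil _
  rcases le_total n₀ n with hn | hn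
  · linarith [hn₀ n hn, le_max_left c (|T| * n₀)]
  · have bounded : T * (n : ℝ) ≤ |T| * n₀ := by
      gcongr
      exact le_abs_self T
    linarith [le_max_right c (|T| * n₀), Nat.cast_nonneg (α := ℝ) (complexity U (firstBits α n))]

namespace FreeEnergyData

variable {U : List Bool →. List Bool} {T : ℝ} (D : FreeEnergyData U T)

theorem exists_Zfun_sub_partitionSum_le (hU : PrefixFree U) (hT : 0 < T) (hT1 : T ≤ 1) (n : ℕ) :
    ∃ k, Zfun U T - partitionSum (D.programs k) T ≤ 1 / 2 ^ n := by
  have sub_lt : Zfun U T - 1 / 2 ^ n < Zfun U T := sub_lt_self _ (by positivity)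
  obtain ⟨k, hk⟩ := D.exists_lt_partitionSum_programs hU hT hT1 sub_lt
  exact ⟨k, by linarith⟩

variable {D} in
theorem energyTest_of_margin (hU : PrefixFree U) (hT : 0 < T) (hT1 : T ≤ 1) {n a k : ℕ}
    (hTa : T ≤ a / 2 ^ n) (ha : a ≤ 2 ^ n) (hn : 2 / 2 ^ n ≤ D.minWeight)
    (hk : Zfun U T - partitionSum (D.programs k) T ≤ 1 / 2 ^ n)
    (margin : (6 / D.minWeight + 4) / 2 ^ n ≤
      (a / 2 ^ n - T) * Real.logb 2 (1 + 2 ^ (-(D.other.length : ℝ) / T))) :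
    D.EnergyTest n a k := by
  have z_pos := D.minWeight_pos
  have decrease := partialFreeEnergy_add_le (D.shortest_mem_programs k)
    (fun _ => D.length_shortest_le_of_mem) (D.other_mem_programs k) D.shortest_ne_other hT hTa
  have deficit : 2 / D.minWeight * (Zfun U T - partitionSum (D.programs k) T) ≤
      2 / D.minWeight * (1 / 2 ^ n) := by gcongr
  have split : (6 / D.minWeight + 4) / 2 ^ n =
      2 / D.minWeight * (1 / 2 ^ n) + (4 / D.minWeight + 4) / 2 ^ n := by ring
  refine energyTest_of_partialFreeEnergy_add_le hT hTa ha hn ?_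
  linarith [D.partialFreeEnergy_sub_Ffun_le hU hT hT1 k]

theorem exists_forall_energyTest (hU : PrefixFree U) (hT : 0 < T) (hT1 : T < 1) :
    ∃ Δ : ℕ, ∀ᶠ n : ℕ in atTop, ⌊T * 2 ^ n⌋₊ + 1 + Δ ≤ 2 ^ n ∧ ∀ k,
      Zfun U T - partitionSum (D.programs k) T ≤ 1 / 2 ^ n →
        D.EnergyTest n (⌊T * 2 ^ n⌋₊ + 1 + Δ) k := by
  set z := D.minWeight
  have z_pos : 0 < z := D.minWeight_pos
  set slope := Real.logb 2 (1 + 2 ^ (-(D.other.length : ℝ) / T))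
  have slope_pos : 0 < slope := Real.logb_pos one_lt_two (lt_add_of_pos_right _ (by positivity))
  obtain ⟨Δ, hΔ⟩ := exists_nat_ge ((6 / z + 4) / slope)
  rw [div_le_iff₀ slope_pos] at hΔ
  have two_pow_atTop : Tendsto (fun n : ℕ => (2 : ℝ) ^ n) atTop atTop :=
    tendsto_pow_atTop_atTop_of_one_lt one_lt_two
  refine ⟨Δ, ?_⟩
  filter_upwards [two_pow_atTop.eventually_ge_atTop (2 / z),
    two_pow_atTop.eventually_ge_atTop ((1 + Δ) / (1 - T))] with n hz hroom
  have pow_pos : (0 : ℝ) < 2 ^ n := by positivity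
  have floor_le : (⌊T * 2 ^ n⌋₊ : ℝ) ≤ T * 2 ^ n := Nat.floor_le (by positivity)
  have lt_floor : T * 2 ^ n < ⌊T * 2 ^ n⌋₊ + 1 := Nat.lt_floor_add_one _
  rw [div_le_iff₀ (sub_pos.2 hT1)] at hroom
  have le_pow : ⌊T * 2 ^ n⌋₊ + 1 + Δ ≤ 2 ^ n := by
    rw [← Nat.cast_le (α := ℝ)]
    push_cast
    linarith
  refine ⟨le_pow, fun k hk => ?_⟩
  set a := ⌊T * 2 ^ n⌋₊ + 1 + Δ with ha
  have margin : Δ / 2 ^ n ≤ (a : ℝ) / 2 ^ n - T := by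
    rw [div_le_iff₀ pow_pos, sub_mul, div_mul_cancel₀ _ pow_pos.ne', ha]
    push_cast
    linarith
  refine energyTest_of_margin hU hT hT1.le (sub_nonneg.1 (margin.trans' (by positivity))) le_pow
    ?_ hk ?_
  · rwa [div_le_iff₀ pow_pos, ← div_le_iff₀' z_pos]
  · calc (6 / z + 4) / 2 ^ n ≤ Δ * slope / 2 ^ n := by gcongr
      _ = Δ / 2 ^ n * slope := by ring
      _ ≤ (a / 2 ^ n - T) * slope := by gcongr

theorem exists_partrec_newString_of_energyTest (Δ : ℕ) :
    ∃ φ : List Bool →. List Bool, Partrec φ ∧ ∀ s x, x ∈ φ s ↔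
      ∃ k, IsLeast {k | D.EnergyTest s.length (binVal s + 1 + Δ) k} k ∧ D.newString k = x := by
  have parameters : Computable fun z : List Bool × ℕ =>
      ((z.1.length, binVal z.1 + 1 + Δ), z.2) := by
    refine ((Primrec.list_length.comp Primrec.fst).pair (Primrec.nat_add.comp (Primrec.succ.comp
      (primrec_binVal.comp Primrec.fst)) (Primrec.const Δ))).to_comp.pair Computable.snd
  obtain ⟨least, hleast, mem_least⟩ := exists_partrec_isLeast
    (P := fun (s : List Bool) k => D.EnergyTest s.length (binVal s + 1 + Δ) k)
    (ComputablePred.computable_of_manyOneReducible ⟨_, parameters, fun _ => Iff.rfl⟩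
      D.computablePred_energyTest)
  refine ⟨_, hleast.map (D.computable_newString.comp Computable.snd).to₂, fun s x => ?_⟩
  simp only [Part.mem_map_iff, mem_least]

theorem le_complexity_newString (hU : OptimalMachine U) (hT : 0 < T) (hT1 : T ≤ 1) {k n : ℕ} {C : ℝ}
    (hC : 0 < C) (hk : Zfun U T - partitionSum (D.programs k) T ≤ C / 2 ^ n) :
    T * n - T * Real.logb 2 C ≤ complexity U (D.newString k) := by
  obtain ⟨r, hr⟩ := hU.exists_program (D.newString k)
  obtain ⟨p, hp, hlength⟩ := exists_length_eq_complexity hr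
  have missed := partitionSum_add_rpow_le_Zfun hU.2.1 (fun _ => D.dom_of_mem_programs)
    (Part.dom_iff_mem.2 ⟨_, hp⟩) (D.notMem_programs_of_newString_mem hp) hT hT1
  have weight_le : (2 : ℝ) ^ (-(p.length : ℝ) / T) ≤ C / 2 ^ n := by linarith
  have log_le := Real.logb_le_logb_of_le one_lt_two (by positivity) weight_le
  rw [Real.logb_rpow two_pos (by norm_num), Real.logb_div hC.ne' (by positivity), Real.logb_pow,
    Real.logb_self_eq_one one_lt_two, div_le_iff₀ hT] at log_le
  rw [← hlength]
  linarith

variable {D} in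
theorem Zfun_sub_partitionSum_le_of_energyTest_floor (hU : PrefixFree U) (hT : 0 < T)
    (hT1 : T < 1) {Δ n k : ℕ} (h : D.EnergyTest n (⌊T * 2 ^ n⌋₊ + 1 + Δ) k)
    (le_pow : ⌊T * 2 ^ n⌋₊ + 1 + Δ ≤ 2 ^ n) :
    Zfun U T - partitionSum (D.programs k) T ≤ (1 + Δ) / (T * (1 - T)) / 2 ^ n := by
  have pow_pos : (0 : ℝ) < 2 ^ n := by positivity
  have floor_le : (⌊T * 2 ^ n⌋₊ : ℝ) ≤ T * 2 ^ n := Nat.floor_le (by positivity)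
  have denom_pos : 0 < T * (1 - T) := mul_pos hT (sub_pos.2 hT1)
  refine (h.Zfun_sub_partitionSum_le hU hT hT1 le_pow).trans ?_
  rw [div_right_comm]
  refine div_le_div_of_nonneg_right ?_ denom_pos.le
  rw [le_div_iff₀ pow_pos, sub_mul, div_mul_cancel₀ _ pow_pos.ne']
  push_cast
  linarith

theorem weaklyChaitinTRandom (D : FreeEnergyData U T) (hU : OptimalMachine U) (hT : 0 < T)
    (hT1 : T < 1) : WeaklyChaitinTRandom U T T := by
  obtain ⟨Δ, hΔ⟩ := D.exists_forall_energyTest hU.2.1 hT hT1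
  obtain ⟨φ, hφ, mem_φ⟩ := D.exists_partrec_newString_of_energyTest Δ
  obtain ⟨d, hd⟩ := hU.exists_complexity_le_add hφ
  set C := (1 + Δ) / (T * (1 - T))
  have C_pos : 0 < C := div_pos (by positivity) (mul_pos hT (sub_pos.2 hT1))
  refine weaklyChaitinTRandom_of_eventually (c := T * Real.logb 2 C + d) ?_
  filter_upwards [hΔ] with n hn
  obtain ⟨le_pow, complete⟩ := hn
  have binVal_eq : binVal (firstBits T n) = ⌊T * 2 ^ n⌋₊ := by
    rw [firstBits_eq_binDigits hT.le hT1, binVal_binDigits (by omega)]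
  obtain ⟨k₀, hk₀⟩ := D.exists_Zfun_sub_partitionSum_le hU.2.1 hT hT1.le n
  set tests := {k | D.EnergyTest n (⌊T * 2 ^ n⌋₊ + 1 + Δ) k}
  have least : IsLeast tests (sInf tests) := isLeast_csInf ⟨k₀, complete k₀ hk₀⟩
  have output : D.newString (sInf tests) ∈ φ (firstBits T n) :=
    (mem_φ _ _).2 ⟨_, by rwa [binVal_eq, firstBits, List.length_map, List.length_range], rfl⟩
  have lower := D.le_complexity_newString hU hT hT1.le C_pos
    (Zfun_sub_partitionSum_le_of_energyTest_floor hU.2.1 hT hT1 least.1 le_pow)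
  have upper : (complexity U (D.newString (sInf tests)) : ℝ) ≤ complexity U (firstBits T n) + d :=
    mod_cast hd _ _ output
  linarith

end FreeEnergyData

end Randomness

section Compressibility

theorem tCompressible_of_eventually {U : List Bool →. List Bool} {T α b c : ℝ}
    (h : ∀ᶠ n : ℕ in atTop, (complexity U (firstBits α n) : ℝ) ≤ T * n + b * Real.log n + c) :
    TCompressible U T α := by
  have log_div : Tendsto (fun n : ℕ => Real.log n / n) atTop (nhds 0) :=
    Real.isLittleO_log_id_atTop.tendsto_div_nhds_zero.comp tendsto_natCast_atTop_atTop
  have bound_tendsto : Tendsto (fun n : ℕ => T + b * (Real.log n / n) + c / n) atTop (nhds T) := by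
    simpa using ((log_div.const_mul b).const_add T).add (tendsto_const_div_atTop_nhds_zero_nat c)
  refine (limsup_le_limsup ?_ ?_ bound_tendsto.isBoundedUnder_le).trans_eq bound_tendsto.limsup_eq
  · filter_upwards [h, eventually_gt_atTop 0] with n hn n_pos
    have n_pos' : (0 : ℝ) < n := Nat.cast_pos.2 n_pos
    rw [div_le_iff₀ n_pos']
    calc _ ≤ T * n + b * Real.log n + c := hn
      _ = _ := by field_simp
  · exact IsCoboundedUnder.of_frequently_ge (Frequently.of_forall fun n =>
      (by positivity : (0 : ℝ) ≤ complexity U (firstBits α n) / n))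

theorem natPair_lt_two_pow {n w : ℕ} (hw : w ≤ n) :
    Nat.pair n w < 2 ^ (2 * (Nat.log 2 n + 1)) := calc
  Nat.pair n w < (n + 1) ^ 2 := by
    have := Nat.pair_lt_max_add_one_sq n w
    rwa [max_eq_left hw] at this
  _ ≤ (2 ^ (Nat.log 2 n + 1)) ^ 2 :=
    Nat.pow_le_pow_left (Nat.lt_pow_succ_log_self one_lt_two n) 2
  _ = 2 ^ (2 * (Nat.log 2 n + 1)) := by rw [← pow_mul, mul_comm]

theorem exists_dyadic_lt_le {x : ℝ} (h0 : 0 < x) (h1 : x ≤ 1) (w : ℕ) :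
    ∃ r : ℕ, r < 2 ^ w ∧ (r : ℝ) / 2 ^ w < x ∧ x ≤ r / 2 ^ w + 1 / 2 ^ w := by
  have pow_pos : (0 : ℝ) < 2 ^ w := by positivity
  have ceil_pos : 0 < ⌈x * 2 ^ w⌉₊ := Nat.ceil_pos.2 (by positivity)
  have ceil_le : ⌈x * 2 ^ w⌉₊ ≤ 2 ^ w := Nat.ceil_le.2 (by
    push_cast
    exact mul_le_of_le_one_left pow_pos.le h1)
  refine ⟨⌈x * 2 ^ w⌉₊ - 1, by omega, ?_, ?_⟩
  · rw [div_lt_iff₀ pow_pos, ← Nat.lt_ceil]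
    omega
  · rw [← add_div, le_div_iff₀ pow_pos, Nat.cast_pred ceil_pos, sub_add_cancel]
    exact Nat.le_ceil _

namespace FreeEnergyData

variable {U : List Bool →. List Bool} {T : ℝ} (D : FreeEnergyData U T)

theorem exists_partrec_binDigits_of_tests (δ : ℕ) :
    ∃ φ : ℕ × List Bool →. List Bool, Partrec φ ∧ ∀ n s k a,
      IsLeast {k | D.MassTest s.length (binVal s) k} k → IsLeast {a | D.EnergyTest n a k} a →
        binDigits n (a - 1 - δ) ∈ φ (n, s) := by
  have mass_parameters : Computable fun z : (ℕ × List Bool) × ℕ =>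
      ((z.1.2.length, binVal z.1.2), z.2) :=
    ((Primrec.list_length.comp (Primrec.snd.comp Primrec.fst)).pair
      (primrec_binVal.comp (Primrec.snd.comp Primrec.fst))).to_comp.pair Computable.snd
  obtain ⟨leastStage, partrec_leastStage, mem_leastStage⟩ := exists_partrec_isLeast
    (P := fun (z : ℕ × List Bool) k => D.MassTest z.2.length (binVal z.2) k)
    (ComputablePred.computable_of_manyOneReducible ⟨_, mass_parameters, fun _ => Iff.rfl⟩
      D.computablePred_massTest)
  have energy_parameters : Computable fun z : (ℕ × ℕ) × ℕ => ((z.1.1, z.2), z.1.2) :=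
    ((Computable.fst.comp Computable.fst).pair Computable.snd).pair
      (Computable.snd.comp Computable.fst)
  obtain ⟨leastTemp, partrec_leastTemp, mem_leastTemp⟩ := exists_partrec_isLeast
    (P := fun (z : ℕ × ℕ) a => D.EnergyTest z.1 a z.2)
    (ComputablePred.computable_of_manyOneReducible ⟨_, energy_parameters, fun _ => Iff.rfl⟩
      D.computablePred_energyTest)
  have digits : Computable₂ fun (z : ℕ × List Bool) a => binDigits z.1 (a - 1 - δ) :=
    primrec_binDigits.to_comp.comp (Computable.fst.comp Computable.fst)
      (Primrec.nat_sub.comp (Primrec.pred.comp Primrec.snd) (Primrec.const δ)).to_comp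
  have temp : Partrec fun z : ℕ × List Bool => (leastStage z).bind fun k => leastTemp (z.1, k) :=
    partrec_leastStage.bind (partrec_leastTemp.comp
      ((Computable.fst.comp Computable.fst).pair Computable.snd)).to₂
  refine ⟨_, temp.map digits, fun n s k a hk ha => ?_⟩
  exact (Part.mem_map_iff _).2
    ⟨a, Part.mem_bind ((mem_leastStage (n, s) k).2 hk) ((mem_leastTemp (n, k) a).2 ha), rfl⟩

theorem exists_isLeast_massTest (hU : PrefixFree U) (w : ℕ) :
    ∃ r k : ℕ, r < 2 ^ w ∧ IsLeast {k | D.MassTest w r k} k ∧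
      Zfun U 1 - partitionSum (D.programs k) 1 ≤ 1 / 2 ^ w := by
  have mass_pos : 0 < Zfun U 1 := (partitionSum_pos D.shortest_mem 1).trans_le
    (partitionSum_le_Zfun hU (fun _ => D.dom_of_mem_programs) one_pos le_rfl)
  obtain ⟨r, hr, r_lt, le_r⟩ := exists_dyadic_lt_le mass_pos (Zfun_le_one hU one_pos le_rfl) w
  have least : IsLeast {k | D.MassTest w r k} (sInf {k | D.MassTest w r k}) :=
    isLeast_csInf (D.exists_massTest hU r_lt)
  have tested := MassTest.lt_partitionSum D least.1
  exact ⟨r, _, hr, least, by linarith⟩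

theorem Zfun_sub_partitionSum_le_of_mass (hU : PrefixFree U) (hT : 0 < T) (hT1 : T ≤ 1)
    {k w n : ℕ} (hw : T * n ≤ w)
    (hk : Zfun U 1 - partitionSum (D.programs k) 1 ≤ 1 / 2 ^ w) :
    Zfun U T - partitionSum (D.programs k) T ≤ 1 / 2 ^ n := by
  have hdom : ∀ p ∈ D.programs k, (U p).Dom := fun _ => D.dom_of_mem_programs
  calc Zfun U T - partitionSum (D.programs k) T
      ≤ (Zfun U 1 - partitionSum (D.programs k) 1) ^ (1 / T) :=
        Zfun_sub_partitionSum_le_rpow hU hdom hT hT1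
    _ ≤ (1 / 2 ^ w) ^ (1 / T) := Real.rpow_le_rpow
        (sub_nonneg.2 (partitionSum_le_Zfun hU hdom one_pos le_rfl)) hk (by positivity)
    _ = 1 / 2 ^ (w / T) := by
        rw [Real.div_rpow zero_le_one (by positivity), Real.one_rpow, ← Real.rpow_natCast,
          ← Real.rpow_mul two_pos.le, mul_one_div]
    _ ≤ 1 / 2 ^ n := by
        rw [← Real.rpow_natCast]
        gcongr
        · exact one_le_two
        · rwa [le_div_iff₀' hT]

theorem exists_eventually_complexity_le (D : FreeEnergyData U T) (hU : OptimalMachine U)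
    (hT : 0 < T) (hT1 : T < 1) :
    ∃ d : ℕ, ∀ᶠ n : ℕ in atTop,
      complexity U (firstBits T n) ≤ ⌈T * n⌉₊ + 4 * (Nat.log 2 n + 1) + d := by
  obtain ⟨Δ, hΔ⟩ := D.exists_forall_energyTest hU.2.1 hT hT1
  choose φ hφ mem_φ using D.exists_partrec_binDigits_of_tests
  choose d hd using fun δ => hU.exists_program_length_le (hφ δ)
  refine ⟨(Finset.range (Δ + 1)).sup d, ?_⟩
  filter_upwards [hΔ] with n hn
  obtain ⟨-, complete⟩ := hn
  set w := ⌈T * n⌉₊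
  have w_le : w ≤ n := Nat.ceil_le.2 (mul_le_of_le_one_left (Nat.cast_nonneg n) hT1.le)
  obtain ⟨r, k, hr, hk, mass⟩ := D.exists_isLeast_massTest hU.2.1 w
  have passes := complete k
    (D.Zfun_sub_partitionSum_le_of_mass hU.2.1 hT hT1.le (Nat.le_ceil _) mass)
  set temps := {a | D.EnergyTest n a k}
  have least : IsLeast temps (sInf temps) := isLeast_csInf ⟨_, passes⟩
  set a := sInf temps
  have floor_lt : ⌊T * 2 ^ n⌋₊ < a := by
    rw [Nat.floor_lt (by positivity), ← lt_div_iff₀ (by positivity)]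
    exact EnergyTest.lt_temperature hU.2.1 hT hT1.le least.1
  have a_le : a ≤ ⌊T * 2 ^ n⌋₊ + 1 + Δ := least.2 passes
  set δ := a - 1 - ⌊T * 2 ^ n⌋₊
  have output : firstBits T n ∈ φ δ (n, binDigits w r) := by
    rw [firstBits_eq_binDigits hT.le hT1, show ⌊T * 2 ^ n⌋₊ = a - 1 - δ by omega]
    exact mem_φ δ n _ k a (by rwa [length_binDigits, binVal_binDigits hr]) least
  obtain ⟨p, hp, length_le⟩ := hd δ n (2 * (Nat.log 2 n + 1)) _ _ output
    (by rw [length_binDigits]; exact natPair_lt_two_pow w_le)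
  rw [length_binDigits] at length_le
  have d_le : d δ ≤ (Finset.range (Δ + 1)).sup d :=
    Finset.le_sup (Finset.mem_range.2 (by omega))
  have := complexity_le_length hp
  omega

theorem tCompressible (D : FreeEnergyData U T) (hU : OptimalMachine U) (hT : 0 < T)
    (hT1 : T < 1) : TCompressible U T T := by
  obtain ⟨d, hd⟩ := D.exists_eventually_complexity_le hU hT hT1
  refine tCompressible_of_eventually (b := 4 / Real.log 2) (c := d + 5) ?_
  filter_upwards [hd] with n hn
  have ceil_le : (⌈T * n⌉₊ : ℝ) ≤ T * n + 1 := (Nat.ceil_lt_add_one (by positivity)).le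
  have log_le : (Nat.log 2 n : ℝ) ≤ Real.log n / Real.log 2 := mod_cast Real.natLog_le_logb n 2
  have cast_bound : (complexity U (firstBits T n) : ℝ) ≤ ⌈T * n⌉₊ + 4 * (Nat.log 2 n + 1) + d :=
    mod_cast hn
  calc _ ≤ T * n + 4 * (Real.log n / Real.log 2) + (d + 5) := by linarith
    _ = _ := by ring

end FreeEnergyData

end Compressibility

section FixedPoint

variable {U : List Bool →. List Bool} {T : ℝ}

theorem Ffun_nonneg (hU : PrefixFree U) (hT : 0 < T) (hT1 : T ≤ 1) : 0 ≤ Ffun U T :=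
  mul_nonneg_of_nonpos_of_nonpos (neg_nonpos.2 hT.le)
    (Real.logb_nonpos one_lt_two (tsum_nonneg fun _ => by positivity) (Zfun_le_one hU hT hT1))

theorem OptimalMachine.nontrivial_dom (hU : OptimalMachine U) : U.Dom.Nontrivial := by
  obtain ⟨p, hp⟩ := hU.exists_program []
  obtain ⟨q, hq⟩ := hU.exists_program [true]
  refine ⟨p, Part.dom_iff_mem.2 ⟨_, hp⟩, q, Part.dom_iff_mem.2 ⟨_, hq⟩, ?_⟩
  rintro rfl
  exact List.cons_ne_nil _ _ (Part.mem_unique hq hp)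

theorem nonempty_freeEnergyData (hU : OptimalMachine U) (hT : 0 < T) (hT1 : T ≤ 1)
    (hF : ComputableReal (Ffun U T)) : Nonempty (FreeEnergyData U T) := by
  obtain ⟨p, hp, p_shortest⟩ :=
    exists_minimalFor_of_wellFoundedLT (· ∈ U.Dom) List.length hU.nontrivial_dom.nonempty
  obtain ⟨q, hq, q_ne_p⟩ := hU.nontrivial_dom.exists_ne p
  obtain ⟨E⟩ := nonempty_stagedEnumeration_of_partrec hU.1
  obtain ⟨m, hm⟩ := E.exists_subset_programs (S := {p, q}) (by simpa using ⟨hp, hq⟩)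
  obtain ⟨b, hb, b_approx⟩ := hF.exists_computable_dyadic (Ffun_nonneg hU.2.1 hT hT1)
  exact ⟨{
    toStagedEnumeration := E.delay m
    shortest := p
    other := q
    shortest_mem := hm (Finset.mem_insert_self p _)
    other_mem := hm (Finset.mem_insert_of_mem (Finset.mem_singleton_self q))
    shortest_ne_other := q_ne_p.symm
    length_shortest_le := fun r hr => (le_total p.length r.length).elim id (p_shortest hr)
    energy := b
    computable_energy := hb
    energy_le := fun n => (b_approx n).1
    le_energy_add := fun n => (b_approx n).2 }⟩

end FixedPoint

theorem fixed_point_by_free_energy (U : List Bool →. List Bool)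
    (hU : OptimalMachine U) (T : ℝ) (hT0 : 0 < T) (hT1 : T < 1)
    (hF : ComputableReal (Ffun U T)) :
    WeaklyChaitinTRandom U T T ∧ TCompressible U T T := by
  obtain ⟨D⟩ := nonempty_freeEnergyData hU hT0 hT1.le hF
  exact ⟨D.weaklyChaitinTRandom hU hT0 hT1, D.tCompressible hU hT0 hT1⟩
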